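/- arXiv:1304.6746 — 3 statements merged into one kernel-verified Lean document; each statement's English description precedes it below -/
import Mathlib

section
/- (Glonek's theorem) If f(x) = x₁x₂ and Σ is any positive semidefinite 2×2 matrix with positive diagonal entries, then W_{f,Σ} is distributed as (1/4)·χ²₁. -/
open MeasureTheory ProbabilityTheory Matrix MvPolynomial Real

noncomputable section

/-- The distribution of a vector of independent standard normal random variables. -/
def stdGaussian (ι : Type*) [Fintype ι] : Measure (ι → ℝ) :=
  Measure.pi fun _ => gaussianReal 0 1

/-- `μ` is the distribution of a centered Gaussian random vector with covariance matrix `S`,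
i.e. `μ` is the law of `A Z` for a vector `Z` of i.i.d. standard normals with `A Aᵀ = S`. -/
def IsCenteredGaussian {ι : Type*} [Fintype ι] (μ : Measure (ι → ℝ))
    (S : Matrix ι ι ℝ) : Prop :=
  ∃ A : Matrix ι ι ℝ, A * Aᵀ = S ∧ μ = (stdGaussian ι).map A.mulVec

/-- The gradient of a polynomial. -/
def polyGrad {ι : Type*} [Fintype ι] (f : MvPolynomial ι ℝ) (x : ι → ℝ) : ι → ℝ :=
  fun i => eval x (pderiv i f)

/-- The Wald ratio `W_{f,S}(x) = f(x)² / (∇f(x)ᵀ S ∇f(x))`. -/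
def waldRV {ι : Type*} [Fintype ι] (f : MvPolynomial ι ℝ) (S : Matrix ι ι ℝ)
    (x : ι → ℝ) : ℝ :=
  (eval x f) ^ 2 / (polyGrad f x ⬝ᵥ S.mulVec (polyGrad f x))

/-- The chi-square distribution with `k` degrees of freedom. -/
def chiSq (k : ℕ) : Measure ℝ :=
  (stdGaussian (Fin k)).map fun z => ∑ i, (z i) ^ 2

/-!
The law of a centered Gaussian vector depends only on its covariance matrix `S`, so any
factorization `S = B Bᵀ` may be used to represent it as `B Z` with `Z` standard normal. For
`S = !![s², s t ρ; s t ρ, t²]` choose `B` with rows `s (p, q)` and `t (p, -q)`, where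
`p² = (1 + ρ) / 2` and `q² = (1 - ρ) / 2`. Then `x₁ x₂` becomes a diagonal quadratic form and, with
`c = p²` and `d = q²`, the Wald ratio becomes a quarter of
`(c Z₁² - d Z₂²)² / (c² Z₁² + d² Z₂²)`. In terms of the slope `T = Z₂ / Z₁`, which is a standard
Cauchy variable independent of `R² = Z₁² + Z₂²`, this is `R² U² / (1 + U²)` with `U = c / T - d T`.
When `c + d = 1`, the map `t ↦ c / t - d t` preserves the standard Cauchy law (a variant of Boole's
transformation), so the ratio has the same law as `R² T² / (1 + T²) = Z₂²`.
-/

open scoped NNReal ENNReal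

lemma charFunDual_gaussianReal (m : ℝ) (v : ℝ≥0) (L : StrongDual ℝ ℝ) :
    charFunDual (gaussianReal m v) L = Complex.exp (L 1 * m * Complex.I - v * L 1 ^ 2 / 2) := by
  have hL : L = L 1 • ContinuousLinearMap.id ℝ ℝ := by ext; simp
  conv_lhs => rw [hL]
  rw [← charFun_map_eq_charFunDual_smul, ContinuousLinearMap.coe_id', Measure.map_id,
    charFun_gaussianReal]

namespace IsCenteredGaussian

variable {ι : Type*} [Fintype ι] {μ ν : Measure (ι → ℝ)} {S : Matrix ι ι ℝ}

lemma isProbabilityMeasure (hμ : IsCenteredGaussian μ S) : IsProbabilityMeasure μ := by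
  obtain ⟨A, -, rfl⟩ := hμ
  unfold _root_.stdGaussian
  exact Measure.isProbabilityMeasure_map (by fun_prop)

lemma charFunDual_eq [DecidableEq ι] (hμ : IsCenteredGaussian μ S)
    (L : StrongDual ℝ (ι → ℝ)) :
    charFunDual μ L = Complex.exp (-↑((fun i => L (Pi.single i 1)) ⬝ᵥ
      S *ᵥ fun i => L (Pi.single i 1)) / 2) := by
  obtain ⟨A, rfl, rfl⟩ := hμ
  set w : ι → ℝ := fun i => L (Pi.single i 1)
  have hL (x : ι → ℝ) : L x = w ⬝ᵥ x := by
    conv_lhs => rw [← Finset.univ_sum_single x, map_sum]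
    refine Finset.sum_congr rfl fun i _ => ?_
    rw [← mul_one (x i), ← smul_eq_mul, ← smul_eq_mul, Pi.single_smul, map_smul]
    simp [w, mul_comm]
  have hcoord (i : ι) : charFunDual (gaussianReal 0 1)
      ((L ∘SL A.mulVecLin.toContinuousLinearMap) ∘SL ContinuousLinearMap.single ℝ (fun _ => ℝ) i) =
        Complex.exp (-((w ᵥ* A) i : ℂ) ^ 2 / 2) := by
    have hcol : (w ᵥ* A) i = w ⬝ᵥ A.col i := rfl
    simp [charFunDual_gaussianReal, hL, hcol, neg_div]
  have hquad : w ⬝ᵥ (A * Aᵀ) *ᵥ w = ∑ i, (w ᵥ* A) i ^ 2 := by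
    rw [← mulVec_mulVec, dotProduct_mulVec, mulVec_transpose]
    simp only [dotProduct, sq]
  calc charFunDual ((_root_.stdGaussian ι).map A.mulVec) L
      = charFunDual (_root_.stdGaussian ι) (L ∘SL A.mulVecLin.toContinuousLinearMap) :=
        charFunDual_map A.mulVecLin.toContinuousLinearMap L
    _ = ∏ i, Complex.exp (-((w ᵥ* A) i : ℂ) ^ 2 / 2) := by
        rw [_root_.stdGaussian, charFunDual_pi]
        simp_rw [hcoord]
    _ = Complex.exp (-↑(w ⬝ᵥ (A * Aᵀ) *ᵥ w) / 2) := by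
        rw [← Complex.exp_sum, hquad]
        push_cast
        rw [← Finset.sum_div, Finset.sum_neg_distrib]

protected lemma unique (hμ : IsCenteredGaussian μ S) (hν : IsCenteredGaussian ν S) : μ = ν := by
  classical
  have := hμ.isProbabilityMeasure
  have := hν.isProbabilityMeasure
  exact Measure.ext_of_charFunDual (funext fun L => by rw [hμ.charFunDual_eq, hν.charFunDual_eq])

end IsCenteredGaussian

lemma cdf_cauchyMeasure (x₀ : ℝ) {γ : ℝ≥0} (hγ : γ ≠ 0) (a : ℝ) :
    cdf (cauchyMeasure x₀ γ) a = arctan ((a - x₀) / γ) / π + 1 / 2 := by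
  have hγ_pos : (0 : ℝ) < γ := by positivity
  have hderiv (x : ℝ) :
      HasDerivAt (fun x => arctan ((x - x₀) / γ) / π) (cauchyPDFReal x₀ γ x) x := by
    refine ((((hasDerivAt_id x).sub_const x₀).div_const (γ : ℝ)).arctan.div_const π).congr_deriv ?_
    simp only [cauchyPDFReal_def', NNReal.coe_inv, id]
    field
  have hlim : Filter.Tendsto (fun x => arctan ((x - x₀) / γ) / π) Filter.atBot
      (nhds (-(π / 2) / π)) :=
    ((tendsto_nhds_of_tendsto_nhdsWithin tendsto_arctan_atBot).comp
      ((Filter.tendsto_atBot_add_const_right _ (-x₀) Filter.tendsto_id).atBot_div_const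
        hγ_pos)).div_const π
  have hint := integral_Iic_of_hasDerivAt_of_tendsto (a := a)
    (hderiv a).continuousAt.continuousWithinAt (fun x _ => hderiv x)
    (integrable_cauchyPDFReal x₀).integrableOn hlim
  rw [cdf_eq_real, cauchyMeasure_of_scale_ne_zero x₀ hγ, measureReal_def,
    withDensity_apply _ measurableSet_Iic]
  simp only [cauchyPDF]
  rw [← integral_eq_lintegral_of_nonneg_ae
    (ae_of_all _ fun x => (cauchyPDF_pos x₀ hγ x).le) (by fun_prop), hint]
  field

lemma measureReal_Ioc_eq_cdf_sub (μ : Measure ℝ) [IsProbabilityMeasure μ] {a b : ℝ} (h : a ≤ b) :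
    μ.real (Set.Ioc a b) = cdf μ b - cdf μ a := by
  have hdisj : Disjoint (Set.Iic a) (Set.Ioc a b) :=
    Set.disjoint_left.2 fun _ hx hx' => hx'.1.not_ge hx
  rw [cdf_eq_real, cdf_eq_real, ← Set.Iic_union_Ioc_eq_Iic h,
    measureReal_union hdisj measurableSet_Ioc, add_sub_cancel_left]

lemma measureReal_Ioi_eq_one_sub_cdf (μ : Measure ℝ) [IsProbabilityMeasure μ] (a : ℝ) :
    μ.real (Set.Ioi a) = 1 - cdf μ a := by
  rw [← Set.compl_Iic, probReal_compl_eq_one_sub measurableSet_Iic, cdf_eq_real]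

lemma nullSingletonClass_cauchyMeasure (x₀ : ℝ) {γ : ℝ≥0} (hγ : γ ≠ 0) :
    NullSingletonClass (cauchyMeasure x₀ γ) := by
  rw [cauchyMeasure_of_scale_ne_zero x₀ hγ]
  infer_instance

section DivSubMul

variable {c d : ℝ}

lemma strictAntiOn_Ioi_div_sub_mul (hc : 0 < c) (hd : 0 ≤ d) :
    StrictAntiOn (fun t => c / t - d * t) (Set.Ioi 0) := fun s hs t _ hst => by
  have hdiv : c / t < c / s := div_lt_div_of_pos_left hc hs hst
  have hmul : d * s ≤ d * t := mul_le_mul_of_nonneg_left hst.le hd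
  linarith

lemma strictAntiOn_Iio_div_sub_mul (hc : 0 < c) (hd : 0 ≤ d) :
    StrictAntiOn (fun t => c / t - d * t) (Set.Iio 0) := fun s hs t ht hst => by
  have h := strictAntiOn_Ioi_div_sub_mul hc hd
    (Set.mem_Ioi.2 (neg_pos.2 ht)) (Set.mem_Ioi.2 (neg_pos.2 hs)) (neg_lt_neg hst)
  simp only [div_neg, mul_neg] at h
  linarith

lemma exists_neg_pos_div_sub_mul_eq (hc : 0 < c) (hd : 0 < d) (a : ℝ) :
    ∃ t₁ t₂, t₁ < 0 ∧ 0 < t₂ ∧ c / t₁ - d * t₁ = a ∧ c / t₂ - d * t₂ = a ∧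
      d * (t₁ + t₂) = -a ∧ d * (t₁ * t₂) = -c := by
  set D := √(a ^ 2 + 4 * (c * d))
  have hD : D ^ 2 = a ^ 2 + 4 * (c * d) := sq_sqrt (by positivity)
  obtain ⟨hD₁, hD₂⟩ : -D < a ∧ a < D :=
    abs_lt.1 (abs_lt_of_sq_lt_sq (by nlinarith [mul_pos hc hd]) (sqrt_nonneg _))
  have ht₁ : (-a - D) / (2 * d) < 0 := div_neg_of_neg_of_pos (by linarith) (by linarith)
  have ht₂ : 0 < (-a + D) / (2 * d) := div_pos (by linarith) (by linarith)
  refine ⟨_, _, ht₁, ht₂, ?_, ?_, ?_, ?_⟩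
  · have : -a - D ≠ 0 := by linarith
    field_simp
    linear_combination -hD
  · have : -a + D ≠ 0 := by linarith
    field_simp
    linear_combination -hD
  · field
  · field_simp
    linear_combination -hD

lemma preimage_Iic_div_sub_mul_ae_eq (hc : 0 < c) (hd : 0 ≤ d) {a t₁ t₂ : ℝ} (ht₁ : t₁ < 0)
    (ht₂ : 0 < t₂) (h₁ : c / t₁ - d * t₁ = a) (h₂ : c / t₂ - d * t₂ = a) (μ : Measure ℝ)
    [NullSingletonClass μ] :
    (fun t => c / t - d * t) ⁻¹' Set.Iic a =ᵐ[μ] (Set.Ioc t₁ 0 ∪ Set.Ioi t₂ : Set ℝ) := by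
  filter_upwards [μ.ae_ne 0, μ.ae_ne t₁, μ.ae_ne t₂] with t ht hne₁ hne₂
  refine propext (?_ : c / t - d * t ≤ a ↔ (t₁ < t ∧ t ≤ 0) ∨ t₂ < t)
  rcases ht.lt_or_gt with hneg | hpos
  · have h := (strictAntiOn_Iio_div_sub_mul hc hd).le_iff_ge hneg ht₁
    rw [h₁] at h
    rw [h, hne₁.symm.le_iff_lt]
    grind
  · have h := (strictAntiOn_Ioi_div_sub_mul hc hd).le_iff_ge hpos ht₂
    rw [h₂] at h
    rw [h, hne₂.symm.le_iff_lt]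
    grind

lemma map_cauchyMeasure_div_sub_mul (hc : 0 < c) (hd : 0 < d) {γ δ : ℝ≥0} (hγ : γ ≠ 0)
    (hδ : (δ : ℝ) = c / γ + d * γ) :
    (cauchyMeasure 0 γ).map (fun t => c / t - d * t) = cauchyMeasure 0 δ := by
  have hδ_pos : (0 : ℝ) < δ := by rw [hδ]; positivity
  have hδ' : δ ≠ 0 := by exact_mod_cast hδ_pos.ne'
  have := nullSingletonClass_cauchyMeasure 0 hγ
  have hmeas : Measurable fun t : ℝ => c / t - d * t := by fun_prop
  have := Measure.isProbabilityMeasure_map (μ := cauchyMeasure 0 γ) hmeas.aemeasurable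
  refine Measure.eq_of_cdf _ _ (StieltjesFunction.ext fun a => ?_)
  obtain ⟨t₁, t₂, ht₁, ht₂, h₁, h₂, hsum, hprod⟩ := exists_neg_pos_div_sub_mul_eq hc hd a
  have hdisj : Disjoint (Set.Ioc t₁ 0) (Set.Ioi t₂) :=
    Set.disjoint_left.2 fun t ht => (ht.2.trans ht₂.le).not_gt
  have harctan : arctan (t₁ / γ) + arctan (t₂ / γ) = -arctan (a / δ) := by
    have hsum' : t₁ / γ + t₂ / γ = -a / (d * γ) := by rw [← hsum]; field
    have hprod' : t₁ / γ * (t₂ / γ) = -(c / (d * γ ^ 2)) := by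
      rw [← neg_div, ← hprod]
      field
    have hpos : 0 < c / (d * γ ^ 2) := by positivity
    rw [arctan_add (by linarith), ← arctan_neg, hδ, hsum', hprod', sub_neg_eq_add, add_comm (1 : ℝ)]
    field_simp
  rw [cdf_eq_real, map_measureReal_apply hmeas measurableSet_Iic,
    measureReal_congr (preimage_Iic_div_sub_mul_ae_eq hc hd.le ht₁ ht₂ h₁ h₂ _),
    measureReal_union hdisj measurableSet_Ioi, measureReal_Ioc_eq_cdf_sub _ ht₁.le,
    measureReal_Ioi_eq_one_sub_cdf]
  simp only [cdf_cauchyMeasure 0 hγ, cdf_cauchyMeasure 0 hδ', sub_zero, zero_div, arctan_zero]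
  linear_combination (-1 / π) * harctan

end DivSubMul

lemma lintegral_eq_lintegral_abs_mul_comp_mul_left {a : ℝ} (ha : a ≠ 0) {f : ℝ → ℝ≥0∞}
    (hf : Measurable f) : ∫⁻ x, f x = ∫⁻ x, ENNReal.ofReal |a| * f (a * x) := by
  conv_lhs => rw [← Real.smul_map_volume_mul_left ha]
  rw [lintegral_smul_measure, lintegral_map hf (by fun_prop), smul_eq_mul,
    lintegral_const_mul _ (by fun_prop)]

/-- Polar coordinates with the angle replaced by its tangent: the point on the line through the
origin of slope `q.1`, at signed distance `q.2` from the origin. -/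
def slopePolar (q : ℝ × ℝ) : ℝ × ℝ :=
  (q.2 / √(1 + q.1 ^ 2), q.2 * q.1 / √(1 + q.1 ^ 2))

lemma measurable_slopePolar : Measurable slopePolar := by
  unfold slopePolar
  fun_prop

lemma slopePolar_fst_sq (q : ℝ × ℝ) : (slopePolar q).1 ^ 2 = q.2 ^ 2 / (1 + q.1 ^ 2) := by
  rw [slopePolar, div_pow, sq_sqrt (by positivity)]

lemma slopePolar_snd_sq (q : ℝ × ℝ) :
    (slopePolar q).2 ^ 2 = q.2 ^ 2 * q.1 ^ 2 / (1 + q.1 ^ 2) := by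
  rw [slopePolar, div_pow, mul_pow, sq_sqrt (by positivity)]

lemma slopePolar_fst_sq_add_snd_sq (q : ℝ × ℝ) :
    (slopePolar q).1 ^ 2 + (slopePolar q).2 ^ 2 = q.2 ^ 2 := by
  rw [slopePolar_fst_sq, slopePolar_snd_sq]
  field

lemma lintegral_eq_lintegral_comp_slopePolar {H : ℝ × ℝ → ℝ≥0∞} (hH : Measurable H) :
    ∫⁻ p, H p = ∫⁻ q : ℝ × ℝ, ENNReal.ofReal (|q.2| / (1 + q.1 ^ 2)) * H (slopePolar q) := by
  have hslope := measurable_slopePolar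
  have hmeas : Measurable fun q : ℝ × ℝ =>
      ENNReal.ofReal (|q.2| / (1 + q.1 ^ 2)) * H (slopePolar q) := by fun_prop
  -- Substitute `y = x t`, and then `x = s / √(1 + t²)`.
  calc ∫⁻ p, H p
      = ∫⁻ x : ℝ, ∫⁻ y : ℝ, H (x, y) := lintegral_prod H hH.aemeasurable
    _ = ∫⁻ x : ℝ, ∫⁻ t : ℝ, ENNReal.ofReal |x| * H (x, x * t) := by
        refine lintegral_congr_ae ?_
        filter_upwards [volume.ae_ne 0] with x hx
        exact lintegral_eq_lintegral_abs_mul_comp_mul_left hx (f := fun y => H (x, y)) (by fun_prop)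
    _ = ∫⁻ t : ℝ, ∫⁻ x : ℝ, ENNReal.ofReal |x| * H (x, x * t) :=
        lintegral_lintegral_swap (by unfold Function.uncurry; fun_prop)
    _ = ∫⁻ t : ℝ, ∫⁻ s : ℝ, ENNReal.ofReal (|s| / (1 + t ^ 2)) * H (slopePolar (t, s)) := by
        refine lintegral_congr fun t => ?_
        have ht : 0 < √(1 + t ^ 2) := by positivity
        rw [lintegral_eq_lintegral_abs_mul_comp_mul_left (inv_ne_zero ht.ne') (by fun_prop)]
        refine lintegral_congr fun s => ?_
        rw [← mul_assoc, ← ENNReal.ofReal_mul (by positivity), abs_mul, ← mul_assoc,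
          abs_mul_abs_self, ← mul_inv, mul_self_sqrt (by positivity), slopePolar]
        congr 2 <;> ring_nf
    _ = ∫⁻ q : ℝ × ℝ, ENNReal.ofReal (|q.2| / (1 + q.1 ^ 2)) * H (slopePolar q) :=
        (lintegral_prod _ hmeas.aemeasurable).symm

/-- The law of the distance from the origin to a standard normal point of the plane, multiplied by
an independent random sign; this is the law of the signed distance used by `slopePolar`. -/
def signedRayleighMeasure : Measure ℝ :=
  volume.withDensity fun s => ENNReal.ofReal (|s| / 2 * exp (-s ^ 2 / 2))

instance : SFinite signedRayleighMeasure := by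
  unfold signedRayleighMeasure
  infer_instance

lemma gaussianReal_prod_gaussianReal :
    (gaussianReal 0 1).prod (gaussianReal 0 1) = volume.withDensity fun p : ℝ × ℝ =>
      ENNReal.ofReal ((2 * π)⁻¹ * exp (-(p.1 ^ 2 + p.2 ^ 2) / 2)) := by
  rw [gaussianReal_of_var_ne_zero 0 one_ne_zero, prod_withDensity (by fun_prop) (by fun_prop)]
  congr 1 with p
  rw [gaussianPDF, gaussianPDF, ← ENNReal.ofReal_mul (gaussianPDFReal_nonneg _ _ _)]
  congr 1
  simp only [gaussianPDFReal, sub_zero, NNReal.coe_one, mul_one]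
  rw [mul_mul_mul_comm, ← mul_inv, mul_self_sqrt (by positivity), ← exp_add]
  ring_nf

lemma map_slopePolar_cauchyMeasure_prod :
    ((cauchyMeasure 0 1).prod signedRayleighMeasure).map slopePolar =
      (gaussianReal 0 1).prod (gaussianReal 0 1) := by
  have hslope := measurable_slopePolar
  refine Measure.ext_of_lintegral _ fun F hF => ?_
  rw [lintegral_map hF hslope, cauchyMeasure_of_scale_ne_zero 0 one_ne_zero,
    signedRayleighMeasure, prod_withDensity (by fun_prop) (by fun_prop),
    lintegral_withDensity_eq_lintegral_mul _ (by fun_prop) (by fun_prop),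
    gaussianReal_prod_gaussianReal, lintegral_withDensity_eq_lintegral_mul _ (by fun_prop) hF,
    lintegral_eq_lintegral_comp_slopePolar (by fun_prop)]
  refine lintegral_congr fun q => ?_
  simp only [Pi.mul_apply]
  rw [← mul_assoc, cauchyPDF, ← ENNReal.ofReal_mul (cauchyPDF_pos 0 one_ne_zero _).le,
    ← ENNReal.ofReal_mul (by positivity), slopePolar_fst_sq_add_snd_sq,
    cauchyPDFReal_def]
  congr 2
  simp only [NNReal.coe_one, sub_zero]
  field

/-- The ratio `Q² / (|∇Q|² / 4)` for the quadratic form `Q(x, y) = c x² - d y²`; it is four times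
the Wald ratio of `Q` with respect to the identity covariance matrix. -/
def diagWaldRatio (c d : ℝ) (p : ℝ × ℝ) : ℝ :=
  (c * p.1 ^ 2 - d * p.2 ^ 2) ^ 2 / (c ^ 2 * p.1 ^ 2 + d ^ 2 * p.2 ^ 2)

lemma measurable_diagWaldRatio (c d : ℝ) : Measurable (diagWaldRatio c d) := by
  unfold diagWaldRatio
  fun_prop

lemma diagWaldRatio_zero_right {c : ℝ} (hc : c ≠ 0) (p : ℝ × ℝ) :
    diagWaldRatio c 0 p = p.1 ^ 2 := by
  rcases eq_or_ne p.1 0 with hp | hp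
  · simp [diagWaldRatio, hp]
  · simp only [diagWaldRatio]
    field_simp
    ring

lemma diagWaldRatio_swap (c d : ℝ) (p : ℝ × ℝ) :
    diagWaldRatio c d p.swap = diagWaldRatio d c p := by
  simp only [diagWaldRatio, Prod.fst_swap, Prod.snd_swap]
  ring_nf

lemma diagWaldRatio_slopePolar {c d : ℝ} (hc : 0 < c) (hd : 0 ≤ d) {t : ℝ} (ht : t ≠ 0) (s : ℝ) :
    diagWaldRatio c d (slopePolar (t, s)) =
      (slopePolar (c / (c + d) / t - d / (c + d) * t, s)).2 ^ 2 := by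
  rcases eq_or_ne s 0 with rfl | hs
  · simp [diagWaldRatio, slopePolar]
  have hden : (c ^ 2 + d ^ 2 * t ^ 2) * (1 + t ^ 2) =
      (c + d) ^ 2 * t ^ 2 + (c - d * t ^ 2) ^ 2 := by ring
  have hφ : c / (c + d) / t - d / (c + d) * t = (c - d * t ^ 2) / ((c + d) * t) := by field
  calc diagWaldRatio c d (slopePolar (t, s))
      = s ^ 2 * (c - d * t ^ 2) ^ 2 / ((c ^ 2 + d ^ 2 * t ^ 2) * (1 + t ^ 2)) := by
        simp only [diagWaldRatio, slopePolar_fst_sq, slopePolar_snd_sq]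
        field
    _ = s ^ 2 * (c - d * t ^ 2) ^ 2 / ((c + d) ^ 2 * t ^ 2 + (c - d * t ^ 2) ^ 2) := by rw [hden]
    _ = (slopePolar (c / (c + d) / t - d / (c + d) * t, s)).2 ^ 2 := by
        simp only [slopePolar_snd_sq, hφ]
        field

lemma map_diagWaldRatio_of_pos {c d : ℝ} (hc : 0 < c) (hd : 0 < d) :
    ((gaussianReal 0 1).prod (gaussianReal 0 1)).map (diagWaldRatio c d) =
      (gaussianReal 0 1).map (· ^ 2) := by
  have := nullSingletonClass_cauchyMeasure 0 (one_ne_zero (α := ℝ≥0))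
  have hslope := measurable_slopePolar
  set φ : ℝ → ℝ := fun t => c / (c + d) / t - d / (c + d) * t
  have hφ : MeasurePreserving φ (cauchyMeasure 0 1) (cauchyMeasure 0 1) :=
    ⟨by fun_prop, map_cauchyMeasure_div_sub_mul (by positivity) (by positivity) one_ne_zero
      (by rw [NNReal.coe_one]; field)⟩
  have hne : ∀ᵐ q ∂(cauchyMeasure 0 1).prod signedRayleighMeasure, q.1 ≠ 0 :=
    Measure.quasiMeasurePreserving_fst.ae ((cauchyMeasure 0 1).ae_ne 0)
  have hae : diagWaldRatio c d ∘ slopePolar =ᵐ[(cauchyMeasure 0 1).prod signedRayleighMeasure]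
      (fun q => (slopePolar q).2 ^ 2) ∘ Prod.map φ id :=
    hne.mono fun q hq => diagWaldRatio_slopePolar hc hd.le hq q.2
  calc ((gaussianReal 0 1).prod (gaussianReal 0 1)).map (diagWaldRatio c d)
      = ((cauchyMeasure 0 1).prod signedRayleighMeasure).map (diagWaldRatio c d ∘ slopePolar) := by
        rw [← map_slopePolar_cauchyMeasure_prod,
          Measure.map_map (measurable_diagWaldRatio c d) hslope]
    _ = ((cauchyMeasure 0 1).prod signedRayleighMeasure).map (fun q => (slopePolar q).2 ^ 2) := by
        rw [Measure.map_congr hae, ← Measure.map_map (by fun_prop) (by fun_prop),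
          (hφ.prod (MeasurePreserving.id signedRayleighMeasure)).map_eq]
    _ = (((cauchyMeasure 0 1).prod signedRayleighMeasure).map slopePolar).map
          ((· ^ 2) ∘ Prod.snd) :=
        (Measure.map_map (g := (· ^ 2) ∘ Prod.snd) (by fun_prop) hslope).symm
    _ = (gaussianReal 0 1).map (· ^ 2) := by
        rw [map_slopePolar_cauchyMeasure_prod, ← Measure.map_map (by fun_prop) measurable_snd,
          Measure.map_snd_prod, measure_univ, one_smul]

lemma map_diagWaldRatio_zero_right {c : ℝ} (hc : c ≠ 0) :
    ((gaussianReal 0 1).prod (gaussianReal 0 1)).map (diagWaldRatio c 0) =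
      (gaussianReal 0 1).map (· ^ 2) := by
  have hcomp : diagWaldRatio c 0 = (· ^ 2) ∘ Prod.fst := funext (diagWaldRatio_zero_right hc)
  rw [hcomp, ← Measure.map_map (by fun_prop) measurable_fst, Measure.map_fst_prod, measure_univ,
    one_smul]

lemma map_diagWaldRatio {c d : ℝ} (hc : 0 ≤ c) (hd : 0 ≤ d) (hcd : c + d ≠ 0) :
    ((gaussianReal 0 1).prod (gaussianReal 0 1)).map (diagWaldRatio c d) =
      (gaussianReal 0 1).map (· ^ 2) := by
  rcases hd.eq_or_lt with rfl | hd
  · exact map_diagWaldRatio_zero_right (by simpa using hcd)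
  rcases hc.eq_or_lt with rfl | hc
  · have hswap : diagWaldRatio 0 d = diagWaldRatio d 0 ∘ Prod.swap :=
      funext fun p => (diagWaldRatio_swap d 0 p).symm
    rw [hswap, ← Measure.map_map (measurable_diagWaldRatio d 0) measurable_swap,
      Measure.prod_swap, map_diagWaldRatio_zero_right hd.ne']
  · exact map_diagWaldRatio_of_pos hc hd

lemma measurable_waldRV {ι : Type*} [Fintype ι] (f : MvPolynomial ι ℝ) (S : Matrix ι ι ℝ) :
    Measurable (waldRV f S) := by
  have heval (g : MvPolynomial ι ℝ) : Measurable fun x => eval x g := g.continuous_eval.measurable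
  have hgrad : Measurable (polyGrad f) := measurable_pi_lambda _ fun i => heval (pderiv i f)
  unfold waldRV dotProduct mulVec dotProduct
  fun_prop

/-- When `p² + q² = 1`, a factor `B` of the covariance matrix `B Bᵀ` with variances `s²` and `t²`
and covariance `s t (p² - q²)`. The product of the coordinates of `B z` is the diagonal
quadratic form `s t (p² z₀² - q² z₁²)`. -/
def diagonalizingFactor (s t p q : ℝ) : Matrix (Fin 2) (Fin 2) ℝ :=
  !![s * p, s * q; t * p, -(t * q)]

lemma diagonalizingFactor_mul_transpose (s t p q : ℝ) :
    diagonalizingFactor s t p q * (diagonalizingFactor s t p q)ᵀ =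
      !![s ^ 2 * (p ^ 2 + q ^ 2), s * t * (p ^ 2 - q ^ 2);
        s * t * (p ^ 2 - q ^ 2), t ^ 2 * (p ^ 2 + q ^ 2)] := by
  have htranspose : (diagonalizingFactor s t p q)ᵀ = !![s * p, t * p; s * q, -(t * q)] :=
    (transposeᵣ_eq _).symm
  rw [htranspose, diagonalizingFactor, mul_fin_two]
  ring_nf

lemma exists_eq_diagonalizingFactor_mul_transpose {S : Matrix (Fin 2) (Fin 2) ℝ}
    (hS : S.PosSemidef) (hdiag : ∀ i, 0 < S i i) :
    ∃ s t p q : ℝ, s ≠ 0 ∧ t ≠ 0 ∧ p ^ 2 + q ^ 2 = 1 ∧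
      S = diagonalizingFactor s t p q * (diagonalizingFactor s t p q)ᵀ := by
  set s := √(S 0 0)
  set t := √(S 1 1)
  have hs : s ^ 2 = S 0 0 := sq_sqrt (hdiag 0).le
  have ht : t ^ 2 = S 1 1 := sq_sqrt (hdiag 1).le
  have hs_pos : 0 < s := sqrt_pos.2 (hdiag 0)
  have ht_pos : 0 < t := sqrt_pos.2 (hdiag 1)
  have hsymm : S 1 0 = S 0 1 := hS.isHermitian.apply 0 1
  set ρ := S 0 1 / (s * t)
  have hρ_mul : s * t * ρ = S 0 1 := mul_div_cancel₀ _ (by positivity)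
  obtain ⟨hρ_ge, hρ_le⟩ : -1 ≤ ρ ∧ ρ ≤ 1 := by
    have hdet : S 0 1 ^ 2 ≤ (s * t) ^ 2 := by
      have := hS.det_nonneg
      rw [det_fin_two, hsymm, ← hs, ← ht] at this
      linarith
    rw [← abs_le, abs_div, div_le_one (by positivity)]
    exact sq_le_sq.1 hdet
  have hp : √((1 + ρ) / 2) ^ 2 = (1 + ρ) / 2 := sq_sqrt (by linarith)
  have hq : √((1 - ρ) / 2) ^ 2 = (1 - ρ) / 2 := sq_sqrt (by linarith)
  refine ⟨s, t, √((1 + ρ) / 2), √((1 - ρ) / 2), hs_pos.ne', ht_pos.ne', by rw [hp, hq]; ring, ?_⟩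
  rw [diagonalizingFactor_mul_transpose, hp, hq, eta_fin_two S, hsymm, ← hs, ← ht, ← hρ_mul]
  ring_nf

lemma polyGrad_X_zero_mul_X_one (x : Fin 2 → ℝ) : polyGrad (X 0 * X 1) x = ![x 1, x 0] := by
  ext i
  fin_cases i <;> simp [polyGrad, pderiv_X]

lemma waldRV_X_zero_mul_X_one (S : Matrix (Fin 2) (Fin 2) ℝ) (x : Fin 2 → ℝ) :
    waldRV (X 0 * X 1) S x = (x 0 * x 1) ^ 2 /
      (S 0 0 * x 1 ^ 2 + (S 0 1 + S 1 0) * (x 0 * x 1) + S 1 1 * x 0 ^ 2) := by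
  simp only [waldRV, polyGrad_X_zero_mul_X_one, map_mul, eval_X, vec2_dotProduct, mulVec,
    cons_val_zero, cons_val_one]
  ring_nf

lemma waldRV_diagonalizingFactor_mulVec {s t : ℝ} (hs : s ≠ 0) (ht : t ≠ 0) (p q : ℝ)
    (z : Fin 2 → ℝ) :
    waldRV (X 0 * X 1) (diagonalizingFactor s t p q * (diagonalizingFactor s t p q)ᵀ)
        (diagonalizingFactor s t p q *ᵥ z) =
      1 / 4 * diagWaldRatio (p ^ 2) (q ^ 2) (z 0, z 1) := by
  set x := diagonalizingFactor s t p q *ᵥ z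
  have hx₀ : x 0 = s * p * z 0 + s * q * z 1 := vec2_dotProduct _ _
  have hx₁ : x 1 = t * p * z 0 + -(t * q) * z 1 := vec2_dotProduct _ _
  have hnum : x 0 * x 1 = s * t * (p ^ 2 * z 0 ^ 2 - q ^ 2 * z 1 ^ 2) := by
    rw [hx₀, hx₁]
    ring
  have hden : s ^ 2 * (p ^ 2 + q ^ 2) * x 1 ^ 2 +
      (s * t * (p ^ 2 - q ^ 2) + s * t * (p ^ 2 - q ^ 2)) * (x 0 * x 1) +
        t ^ 2 * (p ^ 2 + q ^ 2) * x 0 ^ 2 =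
      (s * t) ^ 2 * (4 * ((p ^ 2) ^ 2 * z 0 ^ 2 + (q ^ 2) ^ 2 * z 1 ^ 2)) := by
    rw [hx₀, hx₁]
    ring
  rw [waldRV_X_zero_mul_X_one, diagonalizingFactor_mul_transpose]
  simp only [of_apply, cons_val', cons_val_zero, cons_val_one, cons_val_fin_one]
  rw [hden, hnum, mul_pow, mul_div_mul_left _ _ (by positivity), diagWaldRatio]
  field

/-- Glonek's theorem: If `f(x) = x₁x₂` and `Σ` is any positive semidefinite
`2×2` matrix with positive diagonal entries, then `W_{f,Σ} ~ (1/4)·χ²₁`. -/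
theorem glonek (S : Matrix (Fin 2) (Fin 2) ℝ) (hS : S.PosSemidef)
    (hSdiag : ∀ i, 0 < S i i)
    (μ : Measure (Fin 2 → ℝ)) (hμ : IsCenteredGaussian μ S) :
    μ.map (waldRV (X 0 * X 1) S) =
      (gaussianReal 0 1).map (fun z => (1 / 4) * z ^ 2) := by
  obtain ⟨s, t, p, q, hs, ht, hpq, rfl⟩ := exists_eq_diagonalizingFactor_mul_transpose hS hSdiag
  set B := diagonalizingFactor s t p q
  have hratio := measurable_diagWaldRatio (p ^ 2) (q ^ 2)
  have hpair := measurePreserving_finTwoArrow (gaussianReal 0 1)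
  calc μ.map (waldRV (X 0 * X 1) (B * Bᵀ))
      = (_root_.stdGaussian (Fin 2)).map (waldRV (X 0 * X 1) (B * Bᵀ) ∘ B.mulVec) := by
        rw [hμ.unique ⟨B, rfl, rfl⟩, Measure.map_map (measurable_waldRV _ _) (by fun_prop)]
    _ = (_root_.stdGaussian (Fin 2)).map
          ((1 / 4 * ·) ∘ diagWaldRatio (p ^ 2) (q ^ 2) ∘ MeasurableEquiv.finTwoArrow) :=
        congrArg (Measure.map · _) (funext (waldRV_diagonalizingFactor_mulVec hs ht p q))
    _ = (((gaussianReal 0 1).prod (gaussianReal 0 1)).map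
          (diagWaldRatio (p ^ 2) (q ^ 2))).map (1 / 4 * ·) := by
        rw [← hpair.map_eq, Measure.map_map hratio hpair.measurable,
          Measure.map_map (by fun_prop) (hratio.comp hpair.measurable), _root_.stdGaussian]
    _ = ((gaussianReal 0 1).map (· ^ 2)).map (1 / 4 * ·) := by
        rw [map_diagWaldRatio (sq_nonneg p) (sq_nonneg q) (by linarith)]
    _ = (gaussianReal 0 1).map (fun z => 1 / 4 * z ^ 2) :=
        Measure.map_map (by fun_prop) (by fun_prop)
end
end

section
/- Let f(x) = x₁^{α₁}·x₂^{α₂} with real exponents α₁, α₂ > 0, and let Σ be any positive semidefinite 2×2 matrix with positive diagonal entries. Then W_{f,Σ} is distributed as (1/(α₁+α₂)²)·χ²₁. -/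
open MeasureTheory ProbabilityTheory Matrix MvPolynomial Real

noncomputable section

/-!
Write the standard Gaussian vector as a point `z` of the complex plane, so that the coordinates of
`X = A z` are `Xᵢ = ⟪aᵢ, z⟫` and the quadratic form is `‖∑ αᵢ aᵢ / Xᵢ‖ ^ 2`. With `w = z / ‖z‖` one
has `aᵢ / ⟪aᵢ, w⟫ = 2 w / (1 + qᵢ w ^ 2)`, where `qᵢ = conj aᵢ / aᵢ` is unimodular. Each
`1 / (1 + qᵢ v)` maps the unit disc to the half-plane `1 / 2 < re` and the circle to its boundary,
so with `s = ∑ αᵢ` the function `B v = s / (∑ αᵢ / (1 + qᵢ v)) - 1` is inner and vanishes at `0`,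
and the Wald variable is `(‖z‖ * ‖1 + B (w ^ 2)‖ / (2 s)) ^ 2`. An inner function fixing `0`
preserves the uniform measure of the circle, since all its power moments vanish by the mean value
property; averaging over rotations, `(‖z‖, B (w ^ 2))` has the same law as `(‖z‖, w ^ 2)`.
Replacing `B (w ^ 2)` by `w ^ 2` turns the Wald variable into `(re z / s) ^ 2`.
-/

open Filter Set Topology Metric
open scoped ComplexConjugate ENNReal InnerProductSpace

section FourierUniqueness

theorem ext_of_integral_fourier {T : ℝ} [Fact (0 < T)] {μ ν : Measure (AddCircle T)}
    [IsFiniteMeasure μ] [IsFiniteMeasure ν]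
    (h : ∀ n : ℤ, ∫ x, fourier n x ∂μ = ∫ x, fourier n x ∂ν) : μ = ν := by
  have integrable (ρ : Measure (AddCircle T)) [IsFiniteMeasure ρ] (g : C(AddCircle T, ℂ)) :
      Integrable g ρ := g.continuous.integrable_of_hasCompactSupport (.of_compactSpace g)
  let integralCLM (ρ : Measure (AddCircle T)) [IsFiniteMeasure ρ] : C(AddCircle T, ℂ) →L[ℂ] ℂ :=
    LinearMap.mkContinuous
      { toFun := fun g => ∫ x, g x ∂ρ
        map_add' := fun g₁ g₂ => integral_add (integrable ρ g₁) (integrable ρ g₂)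
        map_smul' := fun c g => integral_const_mul c g } (ρ.real univ) fun g =>
      (norm_integral_le_of_norm_le_const (ae_of_all ρ g.norm_coe_le_norm)).trans_eq (mul_comm _ _)
  have integralCLM_eq : integralCLM μ = integralCLM ν :=
    ContinuousLinearMap.ext_on
      ((Submodule.dense_iff_topologicalClosure_eq_top).2 span_fourier_closure_eq_top)
      (forall_mem_range.2 h)
  refine ext_of_forall_integral_eq_of_IsFiniteMeasure fun g => ?_
  have integral_eq := DFunLike.congr_fun integralCLM_eq ⟨fun x => (g x : ℂ), by fun_prop⟩
  simpa [integralCLM, integral_complex_ofReal] using integral_eq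

theorem ext_of_integral_pow_of_norm_eq_one {μ ν : Measure ℂ} [IsFiniteMeasure μ]
    [IsFiniteMeasure ν] (hμ : ∀ᵐ z ∂μ, ‖z‖ = 1) (hν : ∀ᵐ z ∂ν, ‖z‖ = 1)
    (h : ∀ n : ℕ, ∫ z, z ^ n ∂μ = ∫ z, z ^ n ∂ν) : μ = ν := by
  have : Fact (0 < 2 * π) := ⟨two_pi_pos⟩
  let angle : ℂ → AddCircle (2 * π) := fun z => (z.arg : AddCircle (2 * π))
  have measurable_angle : Measurable angle :=
    (AddCircle.measurable_mk').comp Complex.measurable_arg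
  have toCircle_angle {z : ℂ} (hz : ‖z‖ = 1) : ((angle z).toCircle : ℂ) = z := by
    simpa [angle, AddCircle.toCircle_apply_mk, hz] using Complex.norm_mul_exp_arg_mul_I z
  have measurable_toCircle : Measurable fun x : AddCircle (2 * π) => (x.toCircle : ℂ) :=
    (continuous_subtype_val.comp AddCircle.continuous_toCircle).measurable
  have map_toCircle {ρ : Measure ℂ} (hρ : ∀ᵐ z ∂ρ, ‖z‖ = 1) :
      (ρ.map angle).map (fun x => (x.toCircle : ℂ)) = ρ := by
    rw [Measure.map_map measurable_toCircle measurable_angle]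
    exact (Measure.map_congr (hρ.mono fun z hz => toCircle_angle hz)).trans Measure.map_id
  have integral_fourier {ρ : Measure ℂ} (hρ : ∀ᵐ z ∂ρ, ‖z‖ = 1) (n : ℤ) :
      ∫ x, fourier n x ∂(ρ.map angle) = ∫ z, z ^ n ∂ρ := by
    rw [integral_map measurable_angle.aemeasurable (by fun_prop)]
    refine integral_congr_ae (hρ.mono fun z hz => ?_)
    simp only [fourier_apply, AddCircle.toCircle_zsmul, Circle.coe_zpow, toCircle_angle hz]
  have integral_zpow_neg {ρ : Measure ℂ} (hρ : ∀ᵐ z ∂ρ, ‖z‖ = 1) (n : ℕ) :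
      ∫ z, z ^ (-n : ℤ) ∂ρ = conj (∫ z, z ^ n ∂ρ) := by
    rw [← integral_conj]
    refine integral_congr_ae (hρ.mono fun z hz => ?_)
    simp only [_root_.zpow_neg, zpow_natCast, ← inv_pow, Complex.inv_eq_conj hz, map_pow]
  rw [← map_toCircle hμ, ← map_toCircle hν]
  congr 1
  refine ext_of_integral_fourier fun n => ?_
  rw [integral_fourier hμ, integral_fourier hν]
  obtain ⟨n, rfl | rfl⟩ := n.eq_nat_or_neg
  · simpa only [zpow_natCast] using h n
  · rw [integral_zpow_neg hμ, integral_zpow_neg hν, h]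

end FourierUniqueness

section CircleMeasure

/-- The uniform probability measure on the unit circle, as a measure on `ℂ`. -/
def circleMeasure : Measure ℂ :=
  (volume[|Ioc 0 (2 * π)]).map (circleMap 0 1)

instance : IsProbabilityMeasure circleMeasure := by
  have : IsProbabilityMeasure (volume[|Ioc 0 (2 * π)]) :=
    cond_isProbabilityMeasure_of_finite (by simp [pi_pos]) measure_Ioc_lt_top.ne
  exact Measure.isProbabilityMeasure_map (by fun_prop)

instance : NullSingletonClass circleMeasure where
  measure_singleton c := by
    rw [circleMeasure, Measure.map_apply (by fun_prop) (measurableSet_singleton c)]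
    exact cond_absolutelyContinuous
      (((countable_singleton c).preimage_circleMap 0 one_ne_zero).measure_zero _)

theorem ae_circleMeasure_norm_eq_one : ∀ᵐ z ∂circleMeasure, ‖z‖ = 1 := by
  rw [circleMeasure, ae_map_iff (by fun_prop) (measurableSet_eq_fun (by fun_prop) (by fun_prop))]
  exact ae_of_all _ fun θ => by simp

variable {E : Type*} [NormedAddCommGroup E] [NormedSpace ℂ E] {f : ℂ → E}

theorem integral_circleMeasure (hf : StronglyMeasurable f) :
    ∫ z, f z ∂circleMeasure = circleAverage f 0 1 := by
  rw [circleMeasure, integral_map (by fun_prop) hf.aestronglyMeasurable, ProbabilityTheory.cond,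
    integral_smul_measure, circleAverage_def, intervalIntegral.integral_of_le two_pi_pos.le]
  simp [pi_pos.le]

theorem integral_circleMeasure_eq_apply_zero [CompleteSpace E] {C : ℝ}
    (hf : StronglyMeasurable f) (hd : DifferentiableOn ℂ f (ball 0 1))
    (hC : ∀ z ∈ ball 0 1, ‖f z‖ ≤ C)
    (hc : ∀ᵐ z ∂circleMeasure, ContinuousWithinAt f (ball 0 1) z) :
    ∫ z, f z ∂circleMeasure = f 0 := by
  have near_one : ∀ᶠ r : ℝ in 𝓝[<] 1, r ∈ Ioo 0 1 := Ioo_mem_nhdsLT one_pos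
  have mem_ball {r : ℝ} (hr : r ∈ Ioo (0 : ℝ) 1) {z : ℂ} (hz : ‖z‖ ≤ 1) :
      (r : ℂ) * z ∈ ball (0 : ℂ) 1 := by
    rw [mem_ball_zero_iff, norm_mul, Complex.norm_of_nonneg hr.1.le]
    nlinarith [hr.1, hr.2]
  have integral_dilate {r : ℝ} (hr : r ∈ Ioo (0 : ℝ) 1) :
      ∫ z, f (r * z) ∂circleMeasure = f 0 := by
    rw [integral_circleMeasure (f := fun z => f (r * z)) (hf.comp_measurable (by fun_prop))]
    have diffContOnCl : DiffContOnCl ℂ (fun z : ℂ => f (r * z)) (ball 0 |1|) := by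
      rw [abs_one]
      refine DifferentiableOn.diffContOnCl ?_
      rw [closure_ball _ one_ne_zero]
      exact hd.comp (by fun_prop) fun z hz => mem_ball hr (mem_closedBall_zero_iff.1 hz)
    simpa using diffContOnCl.circleAverage
  have tendsto_integral : Tendsto (fun r : ℝ => ∫ z, f (r * z) ∂circleMeasure) (𝓝[<] 1)
      (𝓝 (∫ z, f z ∂circleMeasure)) := by
    refine tendsto_integral_filter_of_dominated_convergence (fun _ => C)
      (Eventually.of_forall fun r => (hf.comp_measurable (by fun_prop)).aestronglyMeasurable)
      (near_one.mono fun r hr => ?_) (integrable_const C) ?_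
    · exact ae_circleMeasure_norm_eq_one.mono fun z hz => hC _ (mem_ball hr hz.le)
    · filter_upwards [hc, ae_circleMeasure_norm_eq_one] with z hcz hz
      refine hcz.tendsto.comp (tendsto_nhdsWithin_iff.2 ⟨?_, near_one.mono fun r hr =>
        mem_ball hr hz.le⟩)
      have : Continuous fun r : ℝ => (r : ℂ) * z := by fun_prop
      simpa using (this.tendsto 1).mono_left nhdsWithin_le_nhds
  refine tendsto_nhds_unique tendsto_integral (tendsto_const_nhds.congr' ?_)
  exact near_one.mono fun r hr => (integral_dilate hr).symm

end CircleMeasure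

section InnerFunctions

/-- Nonconstant inner functions of the unit disc: holomorphic self-maps of the disc with unimodular
boundary values. Boundary values are those of `f` itself on the unit circle, which are required to
be limits from inside the disc almost everywhere. -/
structure IsInnerFunction (f : ℂ → ℂ) : Prop where
  measurable : Measurable f
  differentiableOn : DifferentiableOn ℂ f (ball 0 1)
  mapsTo : MapsTo f (ball 0 1) (ball 0 1)
  continuousWithinAt : ∀ᵐ z ∂circleMeasure, ContinuousWithinAt f (ball 0 1) z
  norm_eq_one : ∀ᵐ z ∂circleMeasure, ‖f z‖ = 1

theorem isInnerFunction_const_mul_pow {u : ℂ} (hu : ‖u‖ = 1) {n : ℕ} (hn : n ≠ 0) :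
    IsInnerFunction fun z => u * z ^ n where
  measurable := by fun_prop
  differentiableOn := by fun_prop
  mapsTo z hz := by
    rw [mem_ball_zero_iff] at hz ⊢
    simpa [hu] using pow_lt_one₀ (norm_nonneg z) hz hn
  continuousWithinAt := ae_of_all _ fun z => by fun_prop
  norm_eq_one := ae_circleMeasure_norm_eq_one.mono fun z hz => by simp [hu, hz]

theorem isInnerFunction_id : IsInnerFunction fun z => z := by
  simpa using isInnerFunction_const_mul_pow norm_one one_ne_zero

namespace IsInnerFunction

variable {f g : ℂ → ℂ}

theorem integral_pow (hf : IsInnerFunction f) (n : ℕ) :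
    ∫ z, f z ^ n ∂circleMeasure = f 0 ^ n := by
  refine integral_circleMeasure_eq_apply_zero (C := 1)
    (hf.measurable.pow_const n).stronglyMeasurable (hf.differentiableOn.pow n) (fun z hz => ?_)
    (hf.continuousWithinAt.mono fun z hz => hz.pow n)
  rw [norm_pow]
  exact pow_le_one₀ (norm_nonneg _) (mem_ball_zero_iff.1 (hf.mapsTo hz)).le

theorem map_circleMeasure (hf : IsInnerFunction f) (hf₀ : f 0 = 0) :
    circleMeasure.map f = circleMeasure := by
  have := Measure.isProbabilityMeasure_map hf.measurable.aemeasurable (μ := circleMeasure)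
  refine ext_of_integral_pow_of_norm_eq_one ?_ ae_circleMeasure_norm_eq_one fun n => ?_
  · exact (ae_map_iff hf.measurable.aemeasurable
      (measurableSet_eq_fun (by fun_prop) (by fun_prop))).2 hf.norm_eq_one
  · rw [integral_map hf.measurable.aemeasurable (by fun_prop), hf.integral_pow,
      isInnerFunction_id.integral_pow, hf₀]

theorem measurePreserving (hf : IsInnerFunction f) (hf₀ : f 0 = 0) :
    MeasurePreserving f circleMeasure circleMeasure :=
  ⟨hf.measurable, hf.map_circleMeasure hf₀⟩

theorem comp (hf : IsInnerFunction f) (hg : IsInnerFunction g) (hg₀ : g 0 = 0) :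
    IsInnerFunction fun z => f (g z) where
  measurable := hf.measurable.comp hg.measurable
  differentiableOn := hf.differentiableOn.comp hg.differentiableOn hg.mapsTo
  mapsTo := hf.mapsTo.comp hg.mapsTo
  continuousWithinAt := by
    filter_upwards [(hg.measurePreserving hg₀).quasiMeasurePreserving.ae hf.continuousWithinAt,
      hg.continuousWithinAt] with z hfz hgz using hfz.comp hgz hg.mapsTo
  norm_eq_one := (hg.measurePreserving hg₀).quasiMeasurePreserving.ae hf.norm_eq_one

end IsInnerFunction

end InnerFunctions

section RotationInvariance

/-- Measures on the plane that are invariant under all rotations about the origin. -/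
def IsRotationInvariant (γ : Measure ℂ) : Prop :=
  ∀ u : ℂ, ‖u‖ = 1 → MeasurePreserving (fun z => u * z) γ γ

namespace IsRotationInvariant

variable {γ : Measure ℂ} {f : ℂ → ℂ}

theorem lintegral_norm_comp_phase [SFinite γ] (hγ : IsRotationInvariant γ)
    (hf : IsInnerFunction f) (hf₀ : f 0 = 0) {h : ℝ × ℂ → ℝ≥0∞} (hh : Measurable h) :
    ∫⁻ z, h (‖z‖, f (z / ‖z‖)) ∂γ = ∫⁻ z, ∫⁻ u, h (‖z‖, z / ‖z‖ * u) ∂circleMeasure ∂γ := by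
  have hfm := hf.measurable
  have rotate {u : ℂ} (hu : ‖u‖ = 1) :
      ∫⁻ z, h (‖z‖, f (z / ‖z‖)) ∂γ = ∫⁻ z, h (‖z‖, f (z / ‖z‖ * u)) ∂γ := by
    rw [← (hγ u hu).lintegral_comp (by fun_prop)]
    simp only [norm_mul, hu, mul_one, mul_comm u, mul_div_right_comm]
  have integral_inner (z : ℂ) : ∫⁻ u, h (‖z‖, f (z / ‖z‖ * u)) ∂circleMeasure =
      ∫⁻ u, h (‖z‖, z / ‖z‖ * u) ∂circleMeasure := by
    rcases eq_or_ne z 0 with rfl | hz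
    · simp [hf₀]
    have rotation : IsInnerFunction fun u => z / ‖z‖ * u := by
      simpa using isInnerFunction_const_mul_pow (u := z / ‖z‖) (by simp [hz]) one_ne_zero
    rw [(rotation.measurePreserving (mul_zero _)).lintegral_comp (f := fun u => h (‖z‖, f u))
        (by fun_prop), (rotation.measurePreserving (mul_zero _)).lintegral_comp
        (f := fun u => h (‖z‖, u)) (by fun_prop),
      (hf.measurePreserving hf₀).lintegral_comp (f := fun u => h (‖z‖, u)) (by fun_prop)]
  calc ∫⁻ z, h (‖z‖, f (z / ‖z‖)) ∂γ
      = ∫⁻ _u, ∫⁻ z, h (‖z‖, f (z / ‖z‖)) ∂γ ∂circleMeasure := by simp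
    _ = ∫⁻ u, ∫⁻ z, h (‖z‖, f (z / ‖z‖ * u)) ∂γ ∂circleMeasure :=
        lintegral_congr_ae (ae_circleMeasure_norm_eq_one.mono fun u hu => rotate hu)
    _ = ∫⁻ z, ∫⁻ u, h (‖z‖, f (z / ‖z‖ * u)) ∂circleMeasure ∂γ :=
        lintegral_lintegral_swap (Measurable.aemeasurable (by fun_prop))
    _ = ∫⁻ z, ∫⁻ u, h (‖z‖, z / ‖z‖ * u) ∂circleMeasure ∂γ := lintegral_congr integral_inner

theorem map_norm_comp_phase [SFinite γ] (hγ : IsRotationInvariant γ)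
    (hf : IsInnerFunction f) (hf₀ : f 0 = 0) :
    γ.map (fun z : ℂ => (‖z‖, f (z / ‖z‖))) = γ.map fun z : ℂ => (‖z‖, z / ‖z‖) := by
  have hfm := hf.measurable
  refine Measure.ext_of_lintegral _ fun h hh => ?_
  rw [lintegral_map hh (by fun_prop), lintegral_map hh (by fun_prop),
    hγ.lintegral_norm_comp_phase hf hf₀ hh,
    hγ.lintegral_norm_comp_phase isInnerFunction_id rfl hh]

end IsRotationInvariant

end RotationInvariance

section HerglotzSum

theorem norm_div_sub_one_sq (s : ℝ) {g : ℂ} (hg : g ≠ 0) :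
    ‖s / g - 1‖ ^ 2 = 1 + s * (s - 2 * g.re) / ‖g‖ ^ 2 := by
  have : ‖g‖ ≠ 0 := norm_ne_zero_iff.2 hg
  have inner_eq : ⟪(s : ℂ), g⟫_ℝ = s * g.re := by simp [Complex.inner, mul_comm]
  rw [div_sub_one hg, norm_div, div_pow, norm_sub_sq_real, inner_eq, Complex.norm_real,
    norm_eq_abs, sq_abs]
  field_simp
  ring

theorem norm_div_sub_one_lt_one_iff {s : ℝ} (hs : 0 < s) {g : ℂ} (hg : g ≠ 0) :
    ‖s / g - 1‖ < 1 ↔ s / 2 < g.re := by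
  have : 0 < ‖g‖ ^ 2 := by positivity
  rw [← sq_lt_one_iff₀ (norm_nonneg _), norm_div_sub_one_sq s hg, add_lt_iff_neg_left,
    div_lt_iff₀ this, zero_mul, ← mul_zero s, mul_lt_mul_iff_right₀ hs, sub_neg,
    div_lt_iff₀' two_pos]

theorem norm_div_sub_one_eq_one_iff {s : ℝ} (hs : s ≠ 0) {g : ℂ} (hg : g ≠ 0) :
    ‖s / g - 1‖ = 1 ↔ g.re = s / 2 := by
  have : ‖g‖ ^ 2 ≠ 0 := by positivity
  rw [← pow_eq_one_iff_of_nonneg (norm_nonneg _) two_ne_zero, norm_div_sub_one_sq s hg, add_eq_left,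
    div_eq_zero_iff, or_iff_left this, mul_eq_zero, or_iff_right hs, sub_eq_zero,
    eq_div_iff two_ne_zero, eq_comm, mul_comm]

theorem half_lt_re_inv_one_add {ξ : ℂ} (hξ : ‖ξ‖ < 1) : 1 / 2 < (1 + ξ)⁻¹.re := by
  have hne : 1 + ξ ≠ 0 := fun h => by simp [eq_neg_of_add_eq_zero_right h] at hξ
  rw [← norm_div_sub_one_lt_one_iff one_pos (inv_ne_zero hne)]
  simpa using hξ

theorem re_inv_one_add_eq_half {ξ : ℂ} (hξ : ‖ξ‖ = 1) (hne : 1 + ξ ≠ 0) :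
    (1 + ξ)⁻¹.re = 1 / 2 := by
  rw [← norm_div_sub_one_eq_one_iff one_ne_zero (inv_ne_zero hne)]
  simpa using hξ

theorem ae_circleMeasure_one_add_mul_ne_zero {ι : Type*} [Countable ι] (q : ι → ℂ) :
    ∀ᵐ v ∂circleMeasure, ∀ i, 1 + q i * v ≠ 0 := by
  refine ae_all_iff.2 fun i => (Measure.ae_ne circleMeasure (-(q i)⁻¹)).mono fun v hv h => hv ?_
  have hqi : q i ≠ 0 := fun hqi => by simp [hqi] at h
  field_simp
  linear_combination h

variable {ι : Type*} [Fintype ι] {α : ι → ℝ} {q : ι → ℂ} {v : ℂ}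

/-- The Herglotz-type sum `∑ αᵢ / (1 + qᵢ v)`. For unimodular `qᵢ` its real part is constant on the
unit circle, which makes its reciprocal, suitably normalized, an inner function. -/
def herglotzSum (α : ι → ℝ) (q : ι → ℂ) (v : ℂ) : ℂ :=
  ∑ i, α i * (1 + q i * v)⁻¹

theorem herglotzSum_zero : herglotzSum α q 0 = ↑(∑ i, α i) := by
  simp [herglotzSum]

theorem re_herglotzSum : (herglotzSum α q v).re = ∑ i, α i * (1 + q i * v)⁻¹.re := by
  simp [herglotzSum]

theorem half_lt_re_herglotzSum (hα : ∀ i, 0 ≤ α i) (hs : 0 < ∑ i, α i) (hq : ∀ i, ‖q i‖ ≤ 1)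
    (hv : ‖v‖ < 1) : (∑ i, α i) / 2 < (herglotzSum α q v).re := by
  have norm_lt (i : ι) : ‖q i * v‖ < 1 := by
    rw [norm_mul]
    exact (mul_le_of_le_one_left (norm_nonneg v) (hq i)).trans_lt hv
  obtain ⟨j, hj⟩ : ∃ j, 0 < α j := by
    by_contra! hle
    exact hs.not_ge (Finset.sum_nonpos fun i _ => hle i)
  rw [re_herglotzSum, Finset.sum_div]
  refine Finset.sum_lt_sum (fun i _ => ?_) ⟨j, Finset.mem_univ j, ?_⟩
  · rw [div_eq_mul_one_div]
    exact mul_le_mul_of_nonneg_left (half_lt_re_inv_one_add (norm_lt i)).le (hα i)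
  · rw [div_eq_mul_one_div]
    exact mul_lt_mul_of_pos_left (half_lt_re_inv_one_add (norm_lt j)) hj

theorem re_herglotzSum_eq_half (hq : ∀ i, ‖q i‖ = 1) (hv : ‖v‖ = 1)
    (hne : ∀ i, 1 + q i * v ≠ 0) : (herglotzSum α q v).re = (∑ i, α i) / 2 := by
  rw [re_herglotzSum, Finset.sum_div]
  refine Finset.sum_congr rfl fun i _ => ?_
  rw [re_inv_one_add_eq_half (by simp [hq i, hv]) (hne i), mul_one_div]

@[fun_prop]
theorem measurable_herglotzSum : Measurable (herglotzSum α q) := by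
  unfold herglotzSum
  fun_prop

theorem differentiableAt_herglotzSum (hne : ∀ i, 1 + q i * v ≠ 0) :
    DifferentiableAt ℂ (herglotzSum α q) v := by
  unfold herglotzSum
  exact DifferentiableAt.fun_sum fun i _ =>
    ((by fun_prop : DifferentiableAt ℂ (fun v => 1 + q i * v) v).fun_inv (hne i)).const_mul _

theorem isInnerFunction_div_herglotzSum_sub_one (hα : ∀ i, 0 ≤ α i) (hs : 0 < ∑ i, α i)
    (hq : ∀ i, ‖q i‖ = 1) :
    IsInnerFunction fun v => (∑ i, α i : ℝ) / herglotzSum α q v - 1 := by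
  have ne_zero_of_half_le {v : ℂ} (hv : (∑ i, α i) / 2 ≤ (herglotzSum α q v).re) :
      herglotzSum α q v ≠ 0 := fun h => by
    rw [h, Complex.zero_re] at hv
    linarith
  have differentiableAt {v : ℂ} (hne : ∀ i, 1 + q i * v ≠ 0)
      (hv : (∑ i, α i) / 2 ≤ (herglotzSum α q v).re) :
      DifferentiableAt ℂ (fun v => (∑ i, α i : ℝ) / herglotzSum α q v - 1) v :=
    ((differentiableAt_const _).fun_div (differentiableAt_herglotzSum hne)
      (ne_zero_of_half_le hv)).sub_const 1
  have half_lt {v : ℂ} (hv : v ∈ ball 0 1) : (∑ i, α i) / 2 < (herglotzSum α q v).re :=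
    half_lt_re_herglotzSum hα hs (fun i => (hq i).le) (mem_ball_zero_iff.1 hv)
  have half_eq : ∀ᵐ v ∂circleMeasure, (∀ i, 1 + q i * v ≠ 0) ∧
      (herglotzSum α q v).re = (∑ i, α i) / 2 := by
    filter_upwards [ae_circleMeasure_norm_eq_one, ae_circleMeasure_one_add_mul_ne_zero q]
      with v hv hne using ⟨hne, re_herglotzSum_eq_half hq hv hne⟩
  refine ⟨by fun_prop, fun v hv => (differentiableAt (fun i h => ?_) (half_lt hv).le)
    |>.differentiableWithinAt, fun v hv => ?_, half_eq.mono fun v hv => ?_,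
    half_eq.mono fun v hv => ?_⟩
  · have : ‖q i * v‖ < 1 := by simpa [hq i] using hv
    simp [eq_neg_of_add_eq_zero_right h] at this
  · rw [mem_ball_zero_iff, norm_div_sub_one_lt_one_iff hs (ne_zero_of_half_le (half_lt hv).le)]
    exact half_lt hv
  · exact (differentiableAt hv.1 hv.2.ge).continuousAt.continuousWithinAt
  · exact (norm_div_sub_one_eq_one_iff hs.ne' (ne_zero_of_half_le hv.2.ge)).2 hv.2

end HerglotzSum

section WaldVariable

theorem div_inner_of_norm_eq_one {a w : ℂ} (ha : a ≠ 0) (hw : ‖w‖ = 1) :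
    a / (⟪a, w⟫_ℝ : ℂ) = 2 * w * (1 + conj a / a * w ^ 2)⁻¹ := by
  have hw₀ : w ≠ 0 := norm_ne_zero_iff.1 (by simp [hw])
  have inner_eq : (⟪a, w⟫_ℝ : ℂ) = a * (1 + conj a / a * w ^ 2) / (2 * w) := by
    rw [Complex.inner, Complex.re_eq_add_conj, map_mul, Complex.conj_conj,
      ← Complex.inv_eq_conj hw]
    field_simp
    ring
  rw [inner_eq, div_div_eq_mul_div, mul_div_mul_left _ _ ha, div_eq_mul_inv]

theorem norm_mul_norm_one_add_sq_div_norm (z : ℂ) :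
    ‖z‖ * ‖1 + (z / ‖z‖) ^ 2‖ = 2 * |z.re| := by
  rcases eq_or_ne z 0 with rfl | hz
  · simp
  have hn : (‖z‖ : ℂ) ≠ 0 := by simpa
  have factor : ‖z‖ * (1 + (z / ‖z‖) ^ 2) = z / ‖z‖ * (2 * z.re : ℝ) := by
    rw [← Complex.add_conj]
    field_simp
    rw [mul_add, Complex.mul_conj']
    ring
  simpa [hz] using congrArg norm factor

variable {ι : Type*} [Fintype ι] {α : ι → ℝ} {a : ι → ℂ}

/-- The Wald variable of the monomial `∏ xᵢ ^ αᵢ` in the linear forms `xᵢ = ⟪aᵢ, z⟫` of the plane,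
written as a function of `z`. -/
def monomialWald (α : ι → ℝ) (a : ι → ℂ) (z : ℂ) : ℝ :=
  (‖∑ i, (α i / ⟪a i, z⟫_ℝ) • a i‖ ^ 2)⁻¹

theorem monomialWald_smul (r : ℝ) (z : ℂ) :
    monomialWald α a (r • z) = r ^ 2 * monomialWald α a z := by
  have sum_eq : ∑ i, (α i / ⟪a i, r • z⟫_ℝ) • a i = r⁻¹ • ∑ i, (α i / ⟪a i, z⟫_ℝ) • a i := by
    simp only [real_inner_smul_right, ← div_div, div_eq_inv_mul (α _) r, mul_div_assoc, mul_smul,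
      Finset.smul_sum]
  rw [monomialWald, sum_eq, norm_smul, mul_pow, mul_inv, norm_eq_abs, sq_abs, inv_pow, inv_inv,
    monomialWald]

theorem monomialWald_of_norm_eq_one (ha : ∀ i, a i ≠ 0) {w : ℂ} (hw : ‖w‖ = 1) :
    monomialWald α a w =
      (2 * ‖herglotzSum α (fun i => conj (a i) / a i) (w ^ 2)‖)⁻¹ ^ 2 := by
  have sum_eq : ∑ i, (α i / ⟪a i, w⟫_ℝ) • a i =
      2 * w * herglotzSum α (fun i => conj (a i) / a i) (w ^ 2) := by
    rw [herglotzSum, Finset.mul_sum]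
    refine Finset.sum_congr rfl fun i _ => ?_
    rw [mul_left_comm, ← div_inner_of_norm_eq_one (ha i) hw, Complex.real_smul,
      Complex.ofReal_div, div_mul_eq_mul_div, mul_div_assoc]
  rw [monomialWald, sum_eq, norm_mul, norm_mul, hw, Complex.norm_ofNat, mul_one, inv_pow]

theorem monomialWald_eq_norm_mul_norm_one_add (ha : ∀ i, a i ≠ 0) (hs : 0 < ∑ i, α i) (z : ℂ) :
    monomialWald α a z = (‖z‖ * ‖1 + ((∑ i, α i : ℝ) /
      herglotzSum α (fun i => conj (a i) / a i) ((z / ‖z‖) ^ 2) - 1)‖ / (2 * ∑ i, α i)) ^ 2 := by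
  rcases eq_or_ne z 0 with rfl | hz
  · simp [monomialWald]
  have hw : ‖z / ‖z‖‖ = 1 := by simp [hz]
  have polar : z = ‖z‖ • (z / ‖z‖) := by
    rw [Complex.real_smul, mul_div_cancel₀]
    simpa
  conv_lhs => rw [polar, monomialWald_smul, monomialWald_of_norm_eq_one ha hw]
  rw [add_sub_cancel, norm_div, Complex.norm_of_nonneg hs.le]
  field_simp

theorem measurable_monomialWald : Measurable (monomialWald α a) := by
  unfold monomialWald
  fun_prop

theorem IsRotationInvariant.map_monomialWald {γ : Measure ℂ} [SFinite γ]
    (hγ : IsRotationInvariant γ) (ha : ∀ i, a i ≠ 0) (hα : ∀ i, 0 ≤ α i) (hs : 0 < ∑ i, α i) :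
    γ.map (monomialWald α a) = γ.map fun z => z.re ^ 2 / (∑ i, α i) ^ 2 := by
  have isInner_sq : IsInnerFunction fun w => w ^ 2 := by
    simpa using isInnerFunction_const_mul_pow norm_one two_ne_zero
  have isInner_herglotz := (isInnerFunction_div_herglotzSum_sub_one hα hs
    (q := fun i => conj (a i) / a i) fun i => by simp [ha i]).comp isInner_sq (by simp)
  have law_eq := (hγ.map_norm_comp_phase isInner_herglotz
    (by simp [herglotzSum_zero, -Complex.ofReal_sum, hs.ne'])).trans
    (hγ.map_norm_comp_phase isInner_sq (by simp)).symm
  let F : ℝ × ℂ → ℝ := fun p => (p.1 * ‖1 + p.2‖ / (2 * ∑ i, α i)) ^ 2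
  have hF : Measurable F := by fun_prop
  have re_eq (z : ℂ) : F (‖z‖, (z / ‖z‖) ^ 2) = z.re ^ 2 / (∑ i, α i) ^ 2 := by
    simp only [F]
    rw [norm_mul_norm_one_add_sq_div_norm, mul_div_mul_left _ _ two_ne_zero, div_pow, sq_abs]
  calc γ.map (monomialWald α a)
      = (γ.map fun z : ℂ => (‖z‖, _)).map F := by
        rw [Measure.map_map hF (by fun_prop (disch := exact isInner_herglotz.measurable))]
        exact congrArg (Measure.map · γ) (funext (monomialWald_eq_norm_mul_norm_one_add ha hs))
    _ = (γ.map fun z : ℂ => (‖z‖, (z / ‖z‖) ^ 2)).map F := congrArg _ law_eq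
    _ = γ.map fun z => z.re ^ 2 / (∑ i, α i) ^ 2 := by
        rw [Measure.map_map hF (by fun_prop)]
        exact congrArg (Measure.map · γ) (funext re_eq)

end WaldVariable

section Gaussian

theorem isRotationInvariant_stdGaussian :
    IsRotationInvariant (ProbabilityTheory.stdGaussian ℂ) := fun u hu =>
  ⟨by fun_prop, stdGaussian_map (rotation ⟨u, mem_sphere_zero_iff_norm.2 hu⟩)⟩

/-- The standard identification of the plane `ℝ²` with `ℂ`. -/
def planeEquivComplex : (Fin 2 → ℝ) ≃ₗ[ℝ] ℂ :=
  Complex.basisOneI.equivFun.symm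

theorem planeEquivComplex_apply (x : Fin 2 → ℝ) :
    planeEquivComplex x = x 0 + x 1 * Complex.I := by
  simp [planeEquivComplex, Module.Basis.equivFun_symm_apply, Fin.sum_univ_two]

theorem measurable_planeEquivComplex : Measurable planeEquivComplex :=
  planeEquivComplex.toLinearMap.continuous_of_finiteDimensional.measurable

theorem inner_planeEquivComplex (x y : Fin 2 → ℝ) :
    ⟪planeEquivComplex x, planeEquivComplex y⟫_ℝ = x ⬝ᵥ y := by
  simp [Complex.inner, planeEquivComplex_apply, dotProduct, Fin.sum_univ_two, mul_comm]

theorem map_planeEquivComplex_stdGaussian :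
    (_root_.stdGaussian (Fin 2)).map planeEquivComplex = ProbabilityTheory.stdGaussian ℂ := by
  rw [stdGaussian_eq_map_pi_orthonormalBasis Complex.orthonormalBasisOneI]
  simp [_root_.stdGaussian, Fin.sum_univ_two, funext planeEquivComplex_apply]

theorem map_re_stdGaussian :
    (ProbabilityTheory.stdGaussian ℂ).map Complex.re = gaussianReal 0 1 := by
  have re_comp : Complex.re ∘ planeEquivComplex = Function.eval 0 := by
    ext x
    simp [planeEquivComplex_apply]
  rw [← map_planeEquivComplex_stdGaussian,
    Measure.map_map Complex.measurable_re measurable_planeEquivComplex, re_comp]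
  exact (measurePreserving_eval (fun _ : Fin 2 => gaussianReal 0 1) 0).map_eq

variable {ι : Type*} [Fintype ι]

theorem dotProduct_mul_transpose_mulVec_self (A : Matrix ι (Fin 2) ℝ) (v : ι → ℝ) :
    v ⬝ᵥ (A * Aᵀ).mulVec v = ‖∑ i, v i • planeEquivComplex (A i)‖ ^ 2 := by
  have sum_eq : ∑ i, v i • planeEquivComplex (A i) = planeEquivComplex (v ᵥ* A) := by
    simp only [vecMul_eq_sum, map_sum, map_smul]
  rw [sum_eq, ← real_inner_self_eq_norm_sq, inner_planeEquivComplex, ← mulVec_mulVec,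
    dotProduct_mulVec, mulVec_transpose]

theorem inv_dotProduct_mul_transpose_mulVec_eq_monomialWald (A : Matrix ι (Fin 2) ℝ) (α : ι → ℝ)
    (x : Fin 2 → ℝ) :
    ((fun i => α i / A.mulVec x i) ⬝ᵥ (A * Aᵀ).mulVec (fun i => α i / A.mulVec x i))⁻¹ =
      monomialWald α (fun i => planeEquivComplex (A i)) (planeEquivComplex x) := by
  simp only [dotProduct_mul_transpose_mulVec_self, monomialWald, inner_planeEquivComplex]
  rfl

end Gaussian

theorem bivariate_monomial_waldRV_general {ι : Type*} [Fintype ι] (A : Matrix ι (Fin 2) ℝ)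
    (hA : ∀ i, 0 < (A * Aᵀ) i i) (α : ι → ℝ) (hα : ∀ i, 0 ≤ α i) (hs : 0 < ∑ i, α i) :
    ((_root_.stdGaussian (Fin 2)).map A.mulVec).map
        (fun x => ((fun i => α i / x i) ⬝ᵥ (A * Aᵀ).mulVec (fun i => α i / x i))⁻¹) =
      (gaussianReal 0 1).map (fun z => z ^ 2 / (∑ i, α i) ^ 2) := by
  have row_ne_zero (i : ι) : planeEquivComplex (A i) ≠ 0 := fun h => by
    rw [map_eq_zero_iff _ planeEquivComplex.injective] at h
    simpa [mul_apply, h] using hA i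
  calc _ = (_root_.stdGaussian (Fin 2)).map
          (monomialWald α (fun i => planeEquivComplex (A i)) ∘ planeEquivComplex) := by
        rw [Measure.map_map (by fun_prop) (by fun_prop)]
        exact congrArg (Measure.map · (_root_.stdGaussian (Fin 2)))
          (funext (inv_dotProduct_mul_transpose_mulVec_eq_monomialWald A α))
    _ = (ProbabilityTheory.stdGaussian ℂ).map (fun z => z.re ^ 2 / (∑ i, α i) ^ 2) := by
        rw [← Measure.map_map measurable_monomialWald measurable_planeEquivComplex,
          map_planeEquivComplex_stdGaussian,
          isRotationInvariant_stdGaussian.map_monomialWald row_ne_zero hα hs]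
    _ = (gaussianReal 0 1).map (fun z => z ^ 2 / (∑ i, α i) ^ 2) := by
        rw [← map_re_stdGaussian, Measure.map_map (by fun_prop) Complex.measurable_re]
        rfl

/-- Let `f(x) = x₁^{α₁} x₂^{α₂}` with real exponents `α₁, α₂ > 0` and let `Σ`
be a positive semidefinite `2×2` matrix with positive diagonal entries.  Then
`W_{f,Σ} ~ (α₁+α₂)⁻² χ²₁`.  Here `W_{f,Σ} = f(X)²/(∇f(X)ᵀ Σ ∇f(X))` is expressed through
the identity `∇f(x) = f(x)·(α₁/x₁, α₂/x₂)`, under which the factor `f(X)²` cancels and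
`W_{f,Σ} = ((α₁/X₁, α₂/X₂) Σ (α₁/X₁, α₂/X₂)ᵀ)⁻¹` almost surely. -/
theorem bivariate_monomial_waldRV
    (S : Matrix (Fin 2) (Fin 2) ℝ) (hS : S.PosSemidef) (hSdiag : ∀ i, 0 < S i i)
    (α : Fin 2 → ℝ) (hα : ∀ i, 0 < α i)
    (μ : Measure (Fin 2 → ℝ)) (hμ : IsCenteredGaussian μ S) :
    μ.map (fun x => ((fun i => α i / x i) ⬝ᵥ S.mulVec (fun i => α i / x i))⁻¹) =
      (gaussianReal 0 1).map (fun z => z ^ 2 / (α 0 + α 1) ^ 2) := by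
  obtain ⟨A, rfl, rfl⟩ := hμ
  simpa only [Fin.sum_univ_two] using bivariate_monomial_waldRV_general A hSdiag α
    (fun i => (hα i).le) (Finset.sum_pos (fun i _ => hα i) Finset.univ_nonempty)
end
end

section
/- Let X = (X₁,X₂)ᵀ and Y = (Y₁,Y₂)ᵀ be independent random vectors, each distributed N₂(0,Σ), where Σ is a positive semidefinite 2×2 matrix with positive diagonal entries. If p₁, p₂ are nonnegative real numbers with p₁ + p₂ = 1, then the random variable p₁·(Y₁/X₁) + p₂·(Y₂/X₂) has the standard Cauchy distribution. -/
open MeasureTheory ProbabilityTheory Matrix MvPolynomial Real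

noncomputable section

/-- The standard Cauchy distribution, with density `1/(π(1+t²))` with respect to Lebesgue
measure. -/
def stdCauchy : Measure ℝ :=
  volume.withDensity fun t => ENNReal.ofReal (1 / (Real.pi * (1 + t ^ 2)))

/-!
The joint law of `(X, Y)` is invariant under the rotations of the pairs `(Xᵢ, Yᵢ)` by a common
angle. Writing `Yᵢ / Xᵢ = tan φᵢ`, one may therefore replace `φᵢ` by `α + φᵢ` with `α` uniform and
independent of `(X, Y)`, and it suffices to treat `∑ᵢ pᵢ tan (α + φᵢ)` for fixed `φ`. For `0 ≤ t`,
with `w = exp (2iα)` and `uᵢ = exp (2iφᵢ)`,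
`exp (i t ∑ᵢ pᵢ tan (α + φᵢ)) = exp (-t ∑ᵢ pᵢ (1 - uᵢ w) / (1 + uᵢ w))`,
which is a bounded holomorphic function of `w` in the unit disc. Its mean over the unit circle is
its value `exp (-t)` at the centre, whatever `φ` is, because `∑ᵢ pᵢ = 1`.
-/

section MeanValue

open Filter Set Metric Topology

theorem circleAverage_of_bounded_of_continuousWithinAt_off_countable {E : Type*}
    [NormedAddCommGroup E] [NormedSpace ℂ E] [CompleteSpace E] {f : ℂ → E} {c : ℂ} {R M : ℝ}
    {s : Set ℂ} (hR : 0 < R) (hs : s.Countable) (hf : DifferentiableOn ℂ f (ball c R))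
    (hM : ∀ z ∈ ball c R, ‖f z‖ ≤ M)
    (hcont : ∀ z ∈ sphere c R \ s, ContinuousWithinAt f (ball c R) z) :
    circleAverage f c R = f c := by
  have hmem : ∀ᶠ r in 𝓝[<] R, ∀ θ, circleMap c r θ ∈ ball c R := by
    filter_upwards [Ioo_mem_nhdsLT hR] with r hr θ
    exact sphere_subset_ball hr.2 (circleMap_mem_sphere c hr.1.le θ)
  have hmean : ∀ᶠ r in 𝓝[<] R, circleAverage f c r = f c := by
    filter_upwards [Ioo_mem_nhdsLT hR] with r hr
    refine DiffContOnCl.circleAverage (hf.mono ?_).diffContOnCl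
    exact closure_ball_subset_closedBall.trans
      (closedBall_subset_ball ((abs_of_pos hr.1).trans_lt hr.2))
  have hlim : Tendsto (circleAverage f c) (𝓝[<] R) (𝓝 (circleAverage f c R)) := by
    refine (intervalIntegral.tendsto_integral_filter_of_dominated_convergence
      (fun _ => M) ?_ ?_ (by simp) ?_).const_smul _
    · filter_upwards [hmem] with r hr
      exact (hf.continuousOn.comp_continuous (continuous_circleMap c r) hr).aestronglyMeasurable
    · filter_upwards [hmem] with r hr
      exact .of_forall fun θ _ => hM _ (hr θ)
    · filter_upwards [(hs.preimage_circleMap c hR.ne').ae_notMem volume] with θ hθ _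
      refine (hcont _ ⟨circleMap_mem_sphere c hR.le θ, hθ⟩).tendsto.comp
        (tendsto_nhdsWithin_iff.2 ⟨?_, hmem.mono fun r hr => hr θ⟩)
      have hradial : Continuous fun r => circleMap c r θ := by unfold circleMap; fun_prop
      exact hradial.continuousWithinAt
  exact tendsto_nhds_unique hlim (tendsto_const_nhds.congr' (hmean.mono fun _ h => h.symm))

end MeanValue

lemma ext_of_charFun_of_nonneg {μ ν : Measure ℝ} [IsFiniteMeasure μ] [IsFiniteMeasure ν]
    (h : ∀ t, 0 ≤ t → charFun μ t = charFun ν t) : μ = ν := by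
  refine Measure.ext_of_charFun (funext fun t => ?_)
  rcases le_total 0 t with ht | ht
  · exact h t ht
  · have hneg := h (-t) (neg_nonneg.2 ht)
    rw [charFun_neg, charFun_neg] at hneg
    exact (starRingEnd ℂ).injective hneg

lemma map_eq_of_forall_map_eq_of_ae_map_eq {Θ Z W : Type*} [MeasurableSpace Θ]
    [MeasurableSpace Z] [MeasurableSpace W] {U : Measure Θ} [IsProbabilityMeasure U]
    {ν : Measure Z} [IsProbabilityMeasure ν] {κ : Measure W} {T : Θ → Z → Z} {g : Z → W}
    (hT : Measurable (Function.uncurry T)) (hg : Measurable g)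
    (hinv : ∀ θ, ν.map (T θ) = ν) (hfiber : ∀ᵐ z ∂ν, U.map (fun θ => g (T θ z)) = κ) :
    ν.map g = κ := by
  have hgT : Measurable fun x : Θ × Z => g (T x.1 x.2) := hg.comp hT
  ext s hs
  calc ν.map g s
    _ = ∫⁻ θ, ν {z | g (T θ z) ∈ s} ∂U := by
      have hθ : ∀ θ, ν {z | g (T θ z) ∈ s} = ν.map g s := fun θ => by
        conv_rhs => rw [← hinv θ, Measure.map_map hg hT.of_uncurry_left]
        exact (Measure.map_apply (hg.comp hT.of_uncurry_left) hs).symm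
      simp [hθ]
    _ = U.prod ν {x | g (T x.1 x.2) ∈ s} := (Measure.prod_apply (hgT hs)).symm
    _ = ∫⁻ z, U {θ | g (T θ z) ∈ s} ∂ν := Measure.prod_apply_symm (hgT hs)
    _ = ∫⁻ _, κ s ∂ν := by
      refine lintegral_congr_ae (hfiber.mono fun z hz => ?_)
      have hgTz : Measurable fun θ => g (T θ z) := hgT.comp measurable_prodMk_right
      exact (Measure.map_apply hgTz hs).symm.trans (congrArg (· s) hz)
    _ = κ s := by simp

lemma measurable_tan : Measurable Real.tan := by
  simp_rw [funext Real.tan_eq_sin_div_cos]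
  fun_prop

lemma div_rotation_eq_tan {x y : ℝ} (h : x ≠ 0 ∨ y ≠ 0) (α : ℝ) :
    (-Real.sin (-α) * x + Real.cos (-α) * y) / (Real.cos (-α) * x + Real.sin (-α) * y) =
      Real.tan (α + Complex.arg ⟨x, y⟩) := by
  set z : ℂ := ⟨x, y⟩
  have hz : ‖z‖ ≠ 0 := by
    simpa [z, Complex.ext_iff, imp_iff_not_or] using h
  have hx : ‖z‖ * Real.cos z.arg = x := Complex.norm_mul_cos_arg z
  have hy : ‖z‖ * Real.sin z.arg = y := Complex.norm_mul_sin_arg z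
  rw [tan_eq_sin_div_cos, sin_add, cos_add,
    ← mul_div_mul_left (sin α * cos z.arg + cos α * sin z.arg) _ hz,
    Real.sin_neg, Real.cos_neg, ← hx, ← hy]
  congr 1 <;> ring

/-- The Cayley transform, a conformal map of the unit disc onto the right half-plane. It takes
the junk value `0` at `-1`. -/
def cayley (w : ℂ) : ℂ :=
  (1 - w) / (1 + w)

@[simp]
lemma cayley_zero : cayley 0 = 1 := by
  simp [cayley]

lemma cayley_re_nonneg {w : ℂ} (hw : ‖w‖ ≤ 1) : 0 ≤ (cayley w).re := by
  have hsq : w.re * w.re + w.im * w.im ≤ 1 := by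
    rw [← Complex.normSq_apply, Complex.normSq_eq_norm_sq]
    exact pow_le_one₀ (norm_nonneg w) hw
  rw [cayley, Complex.div_re, ← add_div]
  refine div_nonneg ?_ (Complex.normSq_nonneg _)
  simp only [Complex.sub_re, Complex.add_re, Complex.one_re, Complex.sub_im, Complex.add_im,
    Complex.one_im]
  linarith

lemma differentiableAt_cayley {w : ℂ} (hw : w ≠ -1) : DifferentiableAt ℂ cayley w := by
  have hden : 1 + w ≠ 0 := fun h => hw (eq_neg_of_add_eq_zero_right h)
  unfold cayley
  fun_prop (disch := assumption)

lemma cayley_exp_two_mul_I (z : ℂ) : cayley (Complex.exp (2 * z * Complex.I)) =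
    -(Complex.tan z * Complex.I) := by
  have hsq : Complex.exp (2 * z * Complex.I) = Complex.exp (z * Complex.I) ^ 2 := by
    rw [← Complex.exp_nat_mul]; congr 1; push_cast; ring
  have hnum : 1 - Complex.exp (2 * z * Complex.I) =
      -(Complex.sin z * Complex.I) * (2 * Complex.exp (z * Complex.I)) := by
    rw [hsq, Complex.exp_mul_I]
    linear_combination -Complex.sin_sq_add_cos_sq z + Complex.sin z ^ 2 * Complex.I_sq
  have hden : 1 + Complex.exp (2 * z * Complex.I) =
      Complex.cos z * (2 * Complex.exp (z * Complex.I)) := by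
    rw [hsq, Complex.exp_mul_I]
    linear_combination -Complex.sin_sq_add_cos_sq z + Complex.sin z ^ 2 * Complex.I_sq
  rw [cayley, hnum, hden, mul_div_mul_right _ _ (by simp), Complex.tan]
  ring

/-- The uniform distribution of an angle modulo `π`, the period of the tangent. -/
def uniformAngle : Measure ℝ :=
  volume[|Set.Ioo (-(π / 2)) (π / 2)]

lemma uniformAngle_eq_smul :
    uniformAngle = ENNReal.ofReal π⁻¹ • volume.restrict (Set.Ioo (-(π / 2)) (π / 2)) := by
  rw [uniformAngle, ProbabilityTheory.cond, Real.volume_Ioo, sub_neg_eq_add, add_halves,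
    ENNReal.ofReal_inv_of_pos pi_pos]

instance : IsProbabilityMeasure uniformAngle :=
  cond_isProbabilityMeasure_of_finite (by simp [Real.volume_Ioo, pi_pos]) (by simp)

lemma integral_uniformAngle_exp {E : Type*} [NormedAddCommGroup E] [NormedSpace ℝ E]
    (f : ℂ → E) :
    ∫ α : ℝ, f (Complex.exp (2 * α * Complex.I)) ∂uniformAngle = circleAverage f 0 1 := by
  have hcircle : ∀ α : ℝ, Complex.exp (2 * α * Complex.I) = circleMap 0 1 (2 * α + π + -π) := by
    intro α
    simp [circleMap]
  simp_rw [hcircle]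
  rw [uniformAngle_eq_smul, integral_smul_measure, ENNReal.toReal_ofReal (by positivity),
    ← integral_Ioc_eq_integral_Ioo,
    ← intervalIntegral.integral_of_le (by linarith [pi_pos]),
    intervalIntegral.integral_comp_mul_add (fun θ => f (circleMap 0 1 (θ + -π))) two_ne_zero,
    circleAverage_eq_integral_add (-π), smul_smul]
  congr 1
  · ring
  · congr 1 <;> ring

lemma map_tan_uniformAngle : uniformAngle.map Real.tan = stdCauchy := by
  have harctan : (volume.withDensity fun t => ENNReal.ofReal (1 / (1 + t ^ 2))).map arctan =
      volume.restrict (Set.Ioo (-(π / 2)) (π / 2)) := by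
    rw [← range_arctan, ← Set.image_univ]
    convert! map_withDensity_abs_det_fderiv_eq_addHaar volume nullMeasurableSet_univ
      (fun t _ => (hasDerivAt_arctan t).hasFDerivAt.hasFDerivWithinAt) arctan_injective.injOn
      using 3
    · simp
    · ext t
      rw [ContinuousLinearMap.det_toSpanSingleton, abs_of_pos (by positivity)]
  have htan : Real.tan ∘ arctan = id := funext tan_arctan
  rw [uniformAngle_eq_smul, ← harctan, Measure.map_smul,
    Measure.map_map measurable_tan measurable_arctan, htan, Measure.map_id,
    ← withDensity_smul _ (by fun_prop), stdCauchy]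
  congr with t
  rw [Pi.smul_apply, smul_eq_mul, ← ENNReal.ofReal_mul (by positivity), one_div, one_div,
    _root_.mul_inv]

section WeightedSum

variable {ι : Type*} [Fintype ι] {p : ι → ℝ}

lemma circleAverage_exp_neg_sum_cayley {q : ι → ℝ} (hq : ∀ i, 0 ≤ q i)
    {u : ι → ℂ} (hu : ∀ i, ‖u i‖ = 1) :
    circleAverage (fun w => Complex.exp (-∑ i, q i * cayley (u i * w))) 0 1 =
      Complex.exp (-∑ i, q i) := by
  have hdiff : ∀ w, (∀ i, u i * w ≠ -1) →
      DifferentiableAt ℂ (fun w => Complex.exp (-∑ i, q i * cayley (u i * w))) w := by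
    intro w hw
    have hi : ∀ i, DifferentiableAt ℂ (fun w => cayley (u i * w)) w := fun i =>
      (differentiableAt_cayley (hw i)).comp w (by fun_prop)
    fun_prop
  have hnorm : ∀ w ∈ Metric.ball (0 : ℂ) 1, ∀ i, ‖u i * w‖ < 1 := fun w hw i => by
    simpa [hu i] using hw
  rw [circleAverage_of_bounded_of_continuousWithinAt_off_countable (M := 1)
    (s := Set.range fun i => -(u i)⁻¹) one_pos (Set.countable_range _)]
  · simp
  · refine fun w hw => (hdiff w fun i h => ?_).differentiableWithinAt
    simpa [h] using hnorm w hw i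
  · intro w hw
    rw [Complex.norm_exp, Real.exp_le_one_iff]
    simp only [Complex.neg_re, Complex.re_sum, Complex.re_ofReal_mul, neg_nonpos]
    exact Finset.sum_nonneg fun i _ => mul_nonneg (hq i) (cayley_re_nonneg (hnorm w hw i).le)
  · refine fun w hw => (hdiff w fun i h => hw.2 ⟨i, ?_⟩).continuousAt.continuousWithinAt
    have hui : u i ≠ 0 := norm_ne_zero_iff.1 (by simp [hu i])
    rw [eq_comm, ← mul_right_inj' hui, h, mul_neg, mul_inv_cancel₀ hui]

lemma integral_uniformAngle_exp_sum_tan {q : ι → ℝ} (hq : ∀ i, 0 ≤ q i) (φ : ι → ℝ) :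
    ∫ α : ℝ, Complex.exp ((∑ i, q i * Real.tan (α + φ i) : ℝ) * Complex.I) ∂uniformAngle =
      Complex.exp (-∑ i, q i) := by
  have hu : ∀ i, ‖Complex.exp (2 * φ i * Complex.I)‖ = 1 := fun i => by
    exact_mod_cast Complex.norm_exp_ofReal_mul_I (2 * φ i)
  rw [← circleAverage_exp_neg_sum_cayley hq hu, ← integral_uniformAngle_exp]
  congr 1 with α
  have hcayley : ∀ i, cayley
      (Complex.exp (2 * φ i * Complex.I) * Complex.exp (2 * α * Complex.I)) =
        -(Real.tan (α + φ i) * Complex.I) := by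
    intro i
    rw [← Complex.exp_add, Complex.ofReal_tan, Complex.ofReal_add, ← cayley_exp_two_mul_I]
    ring_nf
  simp_rw [hcayley]
  push_cast
  rw [Finset.sum_mul, ← Finset.sum_neg_distrib]
  congr 1
  exact Finset.sum_congr rfl fun i _ => by ring

lemma measurable_sum_mul_tan_add (p φ : ι → ℝ) :
    Measurable fun α => ∑ i, p i * Real.tan (α + φ i) := by
  have := measurable_tan
  fun_prop

lemma charFun_map_sum_mul_tan_add (hp : ∀ i, 0 ≤ p i) (φ : ι → ℝ) {t : ℝ} (ht : 0 ≤ t) :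
    charFun (uniformAngle.map fun α => ∑ i, p i * Real.tan (α + φ i)) t =
      Complex.exp (-(t * ∑ i, p i)) := by
  have hq := integral_uniformAngle_exp_sum_tan (fun i => mul_nonneg ht (hp i)) φ
  rw [charFun_apply_real, integral_map (measurable_sum_mul_tan_add p φ).aemeasurable (by fun_prop)]
  simpa [Finset.mul_sum, mul_assoc] using hq

lemma map_sum_mul_tan_add_uniformAngle (hp : ∀ i, 0 ≤ p i) (hp_sum : ∑ i, p i = 1) (φ : ι → ℝ) :
    uniformAngle.map (fun α => ∑ i, p i * Real.tan (α + φ i)) = stdCauchy := by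
  -- Comparing with a single summand spares the computation of the characteristic function of
  -- `stdCauchy`.
  have htan : uniformAngle.map (fun α => ∑ _ : Unit, 1 * Real.tan (α + 0)) = stdCauchy := by
    simpa using map_tan_uniformAngle
  rw [← htan]
  refine ext_of_charFun_of_nonneg fun t ht => ?_
  rw [charFun_map_sum_mul_tan_add hp φ ht, charFun_map_sum_mul_tan_add (fun _ => zero_le_one) _ ht]
  simp [hp_sum]

lemma map_sum_mul_div_of_rotation_invariant {ν : Measure ((ι → ℝ) × (ι → ℝ))}
    [IsProbabilityMeasure ν] (hν : ∀ θ, ν.map (ContinuousLinearMap.rotation θ) = ν)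
    (hne : ∀ i, ∀ᵐ z ∂ν, z.1 i ≠ 0 ∨ z.2 i ≠ 0) (hp : ∀ i, 0 ≤ p i) (hp_sum : ∑ i, p i = 1) :
    ν.map (fun z => ∑ i, p i * (z.2 i / z.1 i)) = stdCauchy := by
  refine map_eq_of_forall_map_eq_of_ae_map_eq (U := uniformAngle)
    (T := fun α => ContinuousLinearMap.rotation (-α)) ?_ (by fun_prop) (fun α => hν (-α)) ?_
  · simp only [Function.uncurry_def, ContinuousLinearMap.rotation_apply]
    fun_prop
  · filter_upwards [ae_all_iff.2 hne] with z hz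
    rw [← map_sum_mul_tan_add_uniformAngle hp hp_sum fun i => Complex.arg ⟨z.1 i, z.2 i⟩]
    congr 1 with α
    refine Finset.sum_congr rfl fun i _ => ?_
    rw [← div_rotation_eq_tan (hz i)]
    simp [ContinuousLinearMap.rotation_apply]

end WeightedSum

section Gaussian

variable {ι : Type*} [Fintype ι]

instance : IsGaussian (stdGaussian ι) := by
  have hlaw : ∀ i, HasGaussianLaw (fun z : ι → ℝ => z i) (stdGaussian ι) := fun i =>
    (measurePreserving_eval (fun _ : ι => gaussianReal 0 1) i).hasLaw.hasGaussianLaw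
  have hindep : iIndepFun (fun (i : ι) (z : ι → ℝ) => z i) (stdGaussian ι) :=
    iIndepFun_pi fun _ => aemeasurable_id
  simpa using (hindep.hasGaussianLaw hlaw).isGaussian_map

namespace stdGaussian

lemma integral_id_eq_zero : ∫ z, z ∂stdGaussian ι = 0 := by
  ext i
  unfold _root_.stdGaussian
  rw [eval_integral fun i => integrable_eval IsGaussian.integrable_id, integral_eval]
  simp

lemma variance_dotProduct (a : ι → ℝ) :
    Var[fun z => a ⬝ᵥ z; stdGaussian ι] = a ⬝ᵥ a := by
  calc Var[fun z => a ⬝ᵥ z; stdGaussian ι]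
    _ = Var[∑ i, fun z : ι → ℝ => a i * z i; Measure.pi fun _ => gaussianReal 0 1] := by
      simp only [_root_.stdGaussian, dotProduct, Finset.sum_fn]
    _ = ∑ i, Var[fun x => a i * x; gaussianReal 0 1] :=
      variance_sum_pi fun i => IsGaussian.memLp_two_id.const_mul (a i)
    _ = a ⬝ᵥ a := by
      refine Finset.sum_congr rfl fun i _ => ?_
      rw [variance_const_mul (a i) fun x => x, variance_fun_id_gaussianReal, NNReal.coe_one,
        mul_one, sq]

end stdGaussian

namespace IsCenteredGaussian

variable {μ : Measure (ι → ℝ)} {S : Matrix ι ι ℝ}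

protected lemma isGaussian (hμ : IsCenteredGaussian μ S) : IsGaussian μ := by
  obtain ⟨A, -, rfl⟩ := hμ
  exact isGaussian_map A.mulVecLin.toContinuousLinearMap

lemma integral_id_eq_zero (hμ : IsCenteredGaussian μ S) : μ[id] = 0 := by
  obtain ⟨A, -, rfl⟩ := hμ
  have hA := ContinuousLinearMap.integral_id_map (μ := stdGaussian ι)
    IsGaussian.integrable_id A.mulVecLin.toContinuousLinearMap
  rw [stdGaussian.integral_id_eq_zero, map_zero] at hA
  exact hA

lemma variance_eval (hμ : IsCenteredGaussian μ S) (i : ι) : Var[fun x => x i; μ] = S i i := by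
  obtain ⟨A, rfl, rfl⟩ := hμ
  have hA : Measurable A.mulVec := A.mulVecLin.toContinuousLinearMap.measurable
  rw [variance_map (measurable_pi_apply i).aemeasurable hA.aemeasurable]
  exact stdGaussian.variance_dotProduct (A i)

lemma map_eval (hμ : IsCenteredGaussian μ S) (i : ι) :
    μ.map (fun x => x i) = gaussianReal 0 (S i i).toNNReal := by
  have := hμ.isGaussian
  let L : (ι → ℝ) →L[ℝ] ℝ := ContinuousLinearMap.proj i
  have hmean : μ[L] = 0 := by
    rw [L.integral_comp_id_comm IsGaussian.integrable_id, ← map_zero L]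
    exact congrArg L hμ.integral_id_eq_zero
  have hvar : Var[L; μ] = S i i := hμ.variance_eval i
  have hmap := IsGaussian.map_eq_gaussianReal (μ := μ) L
  rwa [hmean, hvar] at hmap

lemma ae_eval_ne_zero (hμ : IsCenteredGaussian μ S) {i : ι} (hi : 0 < S i i) :
    ∀ᵐ x ∂μ, x i ≠ 0 := by
  have := nullSingletonClass_gaussianReal (μ := 0) (v := (S i i).toNNReal) (by simpa using hi)
  have hae : ∀ᵐ x ∂μ.map fun x => x i, x ≠ 0 := by
    rw [hμ.map_eval i]
    exact Measure.ae_ne _ 0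
  exact ae_of_ae_map (measurable_pi_apply i).aemeasurable hae

end IsCenteredGaussian

end Gaussian

theorem weighted_ratio_cauchy_general {ι : Type*} [Fintype ι] {S : Matrix ι ι ℝ}
    (hS : ∀ i, 0 < S i i) {μ : Measure (ι → ℝ)} (hμ : IsCenteredGaussian μ S)
    {Ω : Type*} [MeasurableSpace Ω] {P : Measure Ω} {X Y : Ω → ι → ℝ}
    (hX : HasLaw X μ P) (hY : HasLaw Y μ P) (hXY : IndepFun X Y P)
    {p : ι → ℝ} (hp : ∀ i, 0 ≤ p i) (hp_sum : ∑ i, p i = 1) :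
    HasLaw (fun ω => ∑ i, p i * (Y ω i / X ω i)) stdCauchy P := by
  have := hμ.isGaussian
  have := hX.isProbabilityMeasure
  have hrot : ∀ θ, (μ.prod μ).map (ContinuousLinearMap.rotation θ) = μ.prod μ :=
    IsGaussian.map_rotation_eq_self hμ.integral_id_eq_zero
  have hne : ∀ i, ∀ᵐ z ∂μ.prod μ, z.1 i ≠ 0 ∨ z.2 i ≠ 0 := fun i =>
    (Measure.quasiMeasurePreserving_fst.ae (hμ.ae_eval_ne_zero (hS i))).mono fun _ => Or.inl
  have hratio : HasLaw (fun z : (ι → ℝ) × (ι → ℝ) => ∑ i, p i * (z.2 i / z.1 i)) stdCauchy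
      (μ.prod μ) :=
    ⟨by fun_prop, map_sum_mul_div_of_rotation_invariant hrot hne hp hp_sum⟩
  exact hratio.comp (hXY.hasLaw_prod hX hY)

/-- Let `X = (X₁,X₂)ᵀ` and `Y = (Y₁,Y₂)ᵀ` be independent, each distributed
`N₂(0,Σ)` with `Σ` positive semidefinite with positive diagonal entries.  If `p₁, p₂ ≥ 0`
and `p₁ + p₂ = 1`, then `p₁·(Y₁/X₁) + p₂·(Y₂/X₂)` has the standard Cauchy distribution. -/
theorem weighted_ratio_cauchy
    (S : Matrix (Fin 2) (Fin 2) ℝ) (hS : S.PosSemidef) (hSdiag : ∀ i, 0 < S i i)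
    (μ : Measure (Fin 2 → ℝ)) (hμ : IsCenteredGaussian μ S)
    {Ω : Type*} [MeasurableSpace Ω] (P : Measure Ω) [IsProbabilityMeasure P]
    (Xv Yv : Ω → (Fin 2 → ℝ)) (hXmeas : Measurable Xv) (hYmeas : Measurable Yv)
    (hindep : IndepFun Xv Yv P) (hX : P.map Xv = μ) (hY : P.map Yv = μ)
    (p : Fin 2 → ℝ) (hp : ∀ i, 0 ≤ p i) (hpsum : p 0 + p 1 = 1) :
    P.map (fun ω => p 0 * (Yv ω 0 / Xv ω 0) + p 1 * (Yv ω 1 / Xv ω 1)) = stdCauchy := by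
  simpa using (weighted_ratio_cauchy_general hSdiag hμ ⟨hXmeas.aemeasurable, hX⟩
    ⟨hYmeas.aemeasurable, hY⟩ hindep hp (by simpa using hpsum)).map_eq
end
end
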